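/- There exists a computable sequence P : ℕ → ℕ × List (List (ℕ × Bool)) of codes of finite group presentations such that, writing G_i for the group presented by P i: (1) the word problem is uniformly solvable, i.e. there is a computable function taking a pair (i, w) of an index i : ℕ and a word w : List (ℕ × Bool) in the generators of P i and returning true if and only if w represents the identity element of G_i; (2) the isomorphism problem is solvable within the class, i.e. there is a computable function d : ℕ × ℕ → Bool with d (i, j) = true if and only if G_i and G_j are isomorphic; and (3) the commensurability problem is unsolvable within the class, i.e. there is no computable function e : ℕ × ℕ → Bool with e (i, j) = true if and only if G_i and G_j are commensurable. -/

import Mathlib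

/-!
The groups of the family are `G_ν = (ℤ⁶ ⋊ E) × ℤ/(ν+1)`, where a fixed free group `E` of finite rank
acts on `ℤ⁶` in a way that depends on `ν`.

*Undecidability.* There are a finitely presented group `⟨α | rel⟩` and words
`w_ν = ⁅k, x ^ ν * t * x ^ (-ν)⁆` for which the set `S` of those `ν` with `w_ν` trivial in this group is
not computable, and such that for `ν ∉ S` some quotient of the group has `w_ν` as a central element of
infinite order (`exists_word_family`). To obtain it, the steps of a stack machine are coded as finitely
many affine rules between points of `ℤ^ι` (`exists_affine_undecidable`); the shifts of `t` by
commuting generators correspond to the points, and stable letters commuting with `k` implement the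
rules. Hence `k` commutes with the shifts by all points equivalent to the halting configuration. For the
other points, HNN extensions of a twisted Heisenberg group show that the commutator has infinite order
(`exists_encRel_model`).

*The groups.* Let `F` be free on `α`. The free group `E` has a letter for each element of `α`, one for
each relator, and a distinguished one. It is mapped to `F³` by `a ↦ (a, a, 1)`, `r ↦ (1, r, 1)`, and
`(1, w_ν, a₀)` for the distinguished letter (`actHom`); as in Mihailova's construction, the first two
kinds of letters generate the fibre product of two copies of `F` over the finitely presented group. Now
`F` embeds into `SL₂(ℤ)` by ping-pong (`freeRep_injective`), so `F³` acts faithfully on `(ℤ²)³`.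

*Commensurability.* If `ν ∈ S`, then multiplying the distinguished letter by a word in the other letters
turns its image into `(1, 1, a₀)`. So all the `ℤ⁶ ⋊ E` with `ν ∈ S` are isomorphic, and the
corresponding groups `G_ν` are commensurable, since a finite direct factor is invisible to
commensurability (`fibreSemi_commensurable`). An isomorphism between finite index subgroups of two of the
groups preserves the kernel of the action on `ℤ⁶`, which can be described by commutation relations. For
`ν ∈ S` the image of every finite index subgroup has a nontrivial central element, a power of
`(1, 1, a₀)`. For `ν ∉ S` it has none: such an element would be `(1, 1, a₀ ^ j)` with `w_ν ^ j` trivial in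
the quotient above, which forces `j = 0` (`fibreSemi_not_commensurable`). Thus, for fixed `ν₀ ∈ S`, the
group `G_ν` is commensurable to `G_{ν₀}` if and only if `ν ∈ S`.

*Isomorphism.* The group `ℤ⁶ ⋊ E` is torsion free, so `G_ν` has exactly `ν + 1` elements of finite
order, and `G_ν ≅ G_μ` only if `ν = μ` (`SemiGroup.eq_of_equiv`).

*Word problem.* The group `ℤ⁶ ⋊ E` is embedded by its affine representation on `ℤ⁶ ⊕ ℤ` together with a
representation of `E` into `SL₂(ℤ)`, and the finite factor is detected by an exponent sum. The matrices
of the generators are primitive recursive in `ν` (`primrecPred_wval_semiGen`, `primrecMat_actRep`).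
-/

/-- The element of `FreeGroup (Fin n)` represented by a coded word: an entry `(i, b)`
denotes the `(i % n)`-th generator if `b = true` and its inverse if `b = false`. -/
def wordToFree (n : ℕ) (w : List (ℕ × Bool)) : FreeGroup (Fin n) :=
  (w.map fun p =>
    if h : 0 < n then
      (if p.2 then FreeGroup.of (⟨p.1 % n, Nat.mod_lt _ h⟩ : Fin n)
       else (FreeGroup.of (⟨p.1 % n, Nat.mod_lt _ h⟩ : Fin n))⁻¹)
    else 1).prod

/-- The set of relators of the finite presentation coded by `c`. -/
def codeRels (c : ℕ × List (List (ℕ × Bool))) : Set (FreeGroup (Fin c.1)) :=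
  {g | ∃ w ∈ c.2, g = wordToFree c.1 w}

/-- The group presented by the code `c`: the quotient of `FreeGroup (Fin c.1)` by the
normal closure of the relators. -/
abbrev codeGroup (c : ℕ × List (List (ℕ × Bool))) : Type :=
  PresentedGroup (codeRels c)

/-- Two groups are commensurable if they have isomorphic subgroups of finite index. -/
def GroupCommensurable (G : Type*) (H : Type*) [Group G] [Group H] : Prop :=
  ∃ (K₁ : Subgroup G) (K₂ : Subgroup H), K₁.index ≠ 0 ∧ K₂.index ≠ 0 ∧ Nonempty (K₁ ≃* K₂)

/-! ### Stack machines as piecewise affine systems -/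

/-- A rule of a piecewise affine system on `ι → ℤ`: it relates `src + srcScale * c` to
`tgt + tgtScale * c` for every `c`, all operations being coordinatewise. -/
structure AffineRule (ι : Type) where
  src : ι → ℤ
  srcScale : ι → ℤ
  tgt : ι → ℤ
  tgtScale : ι → ℤ

/-- The one-step relation on `ι → ℤ` defined by a family of affine rules. -/
def AffineRel {ι R : Type} (rule : R → AffineRule ι) (x y : ι → ℤ) : Prop :=
  ∃ (ρ : R) (c : ι → ℤ), x = (rule ρ).src + (rule ρ).srcScale * c ∧
    y = (rule ρ).tgt + (rule ρ).tgtScale * c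

/-- Instructions of a stack machine with states `Q`, stacks indexed by `K` and alphabet `Γ`.
The argument of the continuation of `pop` and `peek` is the top symbol, if there is one. -/
inductive StackInstr (Q K Γ : Type)
  | push : K → Γ → Q → StackInstr Q K Γ
  | pop : K → (Option Γ → Q) → StackInstr Q K Γ
  | peek : K → (Option Γ → Q) → StackInstr Q K Γ
  | halt : StackInstr Q K Γ

namespace StackInstr

variable {Q K Γ : Type} [DecidableEq K]

/-- One step of the stack machine with program `prog`. -/
def step (prog : Q → StackInstr Q K Γ) (c : Q × (K → List Γ)) : Option (Q × (K → List Γ)) :=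
  match prog c.1 with
  | push k a q => some (q, Function.update c.2 k (a :: c.2 k))
  | pop k g => some (g (c.2 k).head?, Function.update c.2 k (c.2 k).tail)
  | peek k g => some (g (c.2 k).head?, c.2)
  | halt => none

/-- The digit of a stack symbol; `0` stands for the bottom of the stack. -/
def digit (e : Γ → ℕ) : Option Γ → ℤ
  | none => 0
  | some a => e a + 1

/-- A stack read as an integer in base `m`, the top symbol being the lowest digit. -/
def encStack (e : Γ → ℕ) (m : ℤ) : List Γ → ℤ
  | [] => 0
  | a :: l => digit e (some a) + m * encStack e m l

/-- A configuration as an integer vector: the coordinate `none` holds the state. -/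
def encCfg (num : Q → ℕ) (e : Γ → ℕ) (m : ℤ) (c : Q × (K → List Γ)) : Option K → ℤ
  | none => num c.1
  | some k => encStack e m (c.2 k)

/-- The rule that changes the state from `s` to `s'` (numbers being modulo `M`) and the stack `k`
from `A + P * c` to `B + R * c`. -/
def mkRule (M : ℤ) (s s' : ℕ) (k : K) (A P B R : ℤ) : AffineRule (Option K) where
  src := fun i => i.elim (s : ℤ) (Function.update 0 k A)
  srcScale := fun i => i.elim M (Function.update 1 k P)
  tgt := fun i => i.elim (s' : ℤ) (Function.update 0 k B)
  tgtScale := fun i => i.elim M (Function.update 1 k R)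

/-- The rule for state `s` when the top symbol is `o`. -/
def instrRule (prog : Q → StackInstr Q K Γ) (num : Q → ℕ) (e : Γ → ℕ) (M m : ℤ) (k₀ : K)
    (s : Q) (o : Option Γ) : AffineRule (Option K) :=
  match prog s with
  | push k a q => mkRule M (num s) (num q) k 0 1 (digit e (some a)) m
  | pop k g => mkRule M (num s) (num (g o)) k (digit e o) m 0 1
  | peek k g => mkRule M (num s) (num (g o)) k (digit e o) m (digit e o) m
  | halt => mkRule M (num s) (num s) k₀ 0 1 0 1

theorem mkRule_ne {M : ℤ} (hM : M ≠ 0) (s s' : ℕ) (k : K) (A B : ℤ) {P R : ℤ} (hP : P ≠ 0)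
    (hR : R ≠ 0) (i : Option K) :
    (mkRule M s s' k A P B R).srcScale i ≠ 0 ∧ (mkRule M s s' k A P B R).tgtScale i ≠ 0 := by
  cases i with
  | none => exact ⟨hM, hM⟩
  | some j =>
    by_cases h : j = k
    · subst h; simpa [mkRule] using ⟨hP, hR⟩
    · simp [mkRule, h]

theorem instrRule_ne (prog : Q → StackInstr Q K Γ) (num : Q → ℕ) (e : Γ → ℕ) {M m : ℤ}
    (hM : M ≠ 0) (hm : m ≠ 0) (k₀ : K) (s : Q) (o : Option Γ) (i : Option K) :
    (instrRule prog num e M m k₀ s o).srcScale i ≠ 0 ∧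
      (instrRule prog num e M m k₀ s o).tgtScale i ≠ 0 := by
  unfold instrRule
  cases prog s <;> exact mkRule_ne hM _ _ _ _ _ (by first | exact hm | simp)
    (by first | exact hm | simp) i

theorem instrRule_src_none (prog : Q → StackInstr Q K Γ) (num : Q → ℕ) (e : Γ → ℕ) (M m : ℤ)
    (k₀ : K) (s : Q) (o : Option Γ) :
    (instrRule prog num e M m k₀ s o).src none = num s ∧
    (instrRule prog num e M m k₀ s o).srcScale none = M := by
  unfold instrRule
  cases prog s <;> exact ⟨rfl, rfl⟩

theorem digit_nonneg (e : Γ → ℕ) (o : Option Γ) : 0 ≤ digit e o := by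
  cases o
  · exact le_rfl
  · simp only [digit]; omega

theorem digit_lt {e : Γ → ℕ} {n : ℕ} (he : ∀ a, e a < n) (o : Option Γ) :
    digit e o < (n : ℤ) + 1 := by
  cases o with
  | none => simp [digit]
  | some a => have := he a; simp [digit]; omega

theorem digit_inj {e : Γ → ℕ} (he : Function.Injective e) {o o' : Option Γ}
    (h : digit e o = digit e o') : o = o' := by
  cases o <;> cases o' <;> simp [digit] at h ⊢
  · omega
  · omega
  · exact he h

/-- Two representations of an integer as digit plus multiple of the base agree. -/
theorem euclid_unique {M s s' u u' : ℤ} (h0 : 0 ≤ s) (h1 : s < M) (h2 : 0 ≤ s') (h3 : s' < M)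
    (h : s + M * u = s' + M * u') : s = s' := by
  have := congrArg (· % M) h
  simp only [Int.add_mul_emod_self_left] at this
  rwa [Int.emod_eq_of_lt h0 h1, Int.emod_eq_of_lt h2 h3] at this

/-- The rules of a stack machine have pairwise disjoint domains, except where they coincide. -/
theorem instrRule_deterministic (prog : Q → StackInstr Q K Γ) (T : Finset Q) (num : Q → ℕ)
    (hnum : Set.InjOn num T) {M : ℕ} (hM : ∀ s ∈ T, num s < M) {e : Γ → ℕ}
    (he : Function.Injective e) {n : ℕ} (hen : ∀ a, e a < n) (k₀ : K) (x y y' : Option K → ℤ)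
    (h : AffineRel (fun ρ : T × Option Γ => instrRule prog num e M (n + 1) k₀ ρ.1 ρ.2) x y)
    (h' : AffineRel (fun ρ : T × Option Γ => instrRule prog num e M (n + 1) k₀ ρ.1 ρ.2) x y') :
    y = y' := by
  obtain ⟨⟨⟨s, hs⟩, o⟩, c, hx, hy⟩ := h
  obtain ⟨⟨⟨s', hs'⟩, o'⟩, c', hx', hy'⟩ := h'
  simp only at hx hy hx' hy'
  have hss : s = s' := by
    have h1 := congrFun hx none
    have h2 := congrFun hx' none
    simp only [Pi.add_apply, Pi.mul_apply, (instrRule_src_none _ _ _ _ _ _ _ _).1,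
      (instrRule_src_none _ _ _ _ _ _ _ _).2] at h1 h2
    have := euclid_unique (by positivity) (by exact_mod_cast hM s hs) (by positivity)
      (by exact_mod_cast hM s' hs') (h1.symm.trans h2)
    exact hnum hs hs' (by exact_mod_cast this)
  subst hss
  have hrule : instrRule prog num e M (n + 1) k₀ s o = instrRule prog num e M (n + 1) k₀ s o' := by
    cases hp : prog s with
    | push k a q => simp [instrRule, hp]
    | halt => simp [instrRule, hp]
    | pop k g | peek k g =>
      have h1 := congrFun hx (some k)
      have h2 := congrFun hx' (some k)
      simp only [instrRule, hp, mkRule, Pi.add_apply, Pi.mul_apply, Option.elim_some,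
        Function.update_self] at h1 h2
      rw [digit_inj he (euclid_unique (digit_nonneg e o) (digit_lt hen o) (digit_nonneg e o')
        (digit_lt hen o') (h1.symm.trans h2))]
  rw [hrule] at hx hy
  have hc : c = c' := by
    funext i
    have h1 := congrFun (hx.symm.trans hx') i
    simp only [Pi.add_apply, Pi.mul_apply, add_right_inj] at h1
    by_cases hM0 : (M : ℤ) = 0
    · have := hM s hs
      omega
    · exact mul_left_cancel₀ (instrRule_ne prog num e hM0 (by positivity) k₀ s o' i).1 h1
  rw [hy, hy', hc]

theorem encStack_head_tail (e : Γ → ℕ) (m : ℤ) (l : List Γ) :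
    encStack e m l = digit e l.head? + m * encStack e m l.tail := by
  cases l <;> simp [encStack, digit]

/-- The affine rules simulate the steps of the machine. -/
theorem rel_of_step (prog : Q → StackInstr Q K Γ) (T : Finset Q) (num : Q → ℕ) (M m : ℤ)
    (e : Γ → ℕ) (k₀ : K) {c c' : Q × (K → List Γ)} (hc : c.1 ∈ T) (h : c' ∈ step prog c) :
    AffineRel (fun ρ : T × Option Γ => instrRule prog num e M m k₀ ρ.1 ρ.2)
      (encCfg num e m c) (encCfg num e m c') := by
  obtain ⟨s, S⟩ := c
  simp only at hc
  cases hp : prog s with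
  | push k a q =>
    simp only [step, hp, Option.mem_def, Option.some.injEq] at h
    subst h
    refine ⟨(⟨s, hc⟩, none), fun i => i.elim 0 fun j => encStack e m (S j), ?_, ?_⟩ <;>
    · simp only [instrRule, hp, mkRule]
      funext i
      rcases i with _ | j
      · simp [encCfg]
      · by_cases hj : j = k
        · subst hj; simp [encCfg, encStack]
        · simp [encCfg, hj]
  | halt => simp [step, hp] at h
  | pop k g | peek k g =>
    simp only [step, hp, Option.mem_def, Option.some.injEq] at h
    subst h
    refine ⟨(⟨s, hc⟩, (S k).head?),
      fun i => i.elim 0 fun j => encStack e m (if j = k then (S j).tail else S j), ?_, ?_⟩ <;>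
    · simp only [instrRule, hp, mkRule]
      funext i
      rcases i with _ | j
      · simp [encCfg]
      · by_cases hj : j = k
        · subst hj; simp [encCfg, ← encStack_head_tail]
        · simp [encCfg, hj]

/-- The equivalence relation generated by a deterministic relation, towards a point that is
fixed by the relation. -/
theorem reflTransGen_of_eqvGen {X : Type*} {r : X → X → Prop}
    (hdet : ∀ x y y', r x y → r x y' → y = y') {z : X} (hz : r z z) {x : X}
    (h : Relation.EqvGen r x z) : Relation.ReflTransGen r x z := by
  suffices H : ∀ x y, Relation.EqvGen r x y →
      (Relation.ReflTransGen r x z ↔ Relation.ReflTransGen r y z) from (H x z h).2 .refl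
  intro x y h
  induction h with
  | refl => rfl
  | symm _ _ _ ih => exact ih.symm
  | trans _ _ _ _ _ ih1 ih2 => exact ih1.trans ih2
  | rel x y hxy =>
    refine ⟨fun hx => ?_, fun hy => .head hxy hy⟩
    rcases hx.cases_head with rfl | ⟨w, hw, hwz⟩
    · rw [hdet _ _ _ hxy hz]
    · rwa [hdet _ _ _ hxy hw]

/-- Reachability of a fixed halting configuration is the equivalence of the codes under the
affine rules. -/
theorem eqvGen_iff_reaches (prog : Q → StackInstr Q K Γ) (T : Finset Q)
    (hT : ∀ c c', c.1 ∈ T → c' ∈ step prog c → c'.1 ∈ T) (num : Q → ℕ)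
    (hnum : Set.InjOn num T) {M : ℕ} (hM : ∀ s ∈ T, num s < M) {e : Γ → ℕ}
    (he : Function.Injective e) {n : ℕ} (hen : ∀ a, e a < n) (k₀ : K) (c d : Q × (K → List Γ))
    (hc : c.1 ∈ T) (hd : d.1 ∈ T) (hdh : prog d.1 = halt) :
    Relation.EqvGen
      (AffineRel (fun ρ : T × Option Γ => instrRule prog num e M (n + 1) k₀ ρ.1 ρ.2))
      (encCfg num e (n + 1) c) (encCfg num e (n + 1) d) ↔
    ∃ d', d'.1 ∈ T ∧ prog d'.1 = halt ∧ encCfg num e (n + 1) d' = encCfg num e (n + 1) d ∧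
      StateTransition.Reaches (step prog) c d' := by
  set r := AffineRel (fun ρ : T × Option Γ => instrRule prog num e M (n + 1) k₀ ρ.1 ρ.2) with hr
  have hdet : ∀ x y y', r x y → r x y' → y = y' :=
    instrRule_deterministic prog T num hnum hM he hen k₀
  have hself : ∀ d : Q × (K → List Γ), d.1 ∈ T → prog d.1 = halt →
      r (encCfg num e (n + 1) d) (encCfg num e (n + 1) d) := by
    intro d hd hdh
    refine ⟨(⟨d.1, hd⟩, none), fun i => i.elim 0 fun j => encStack e (n + 1) (d.2 j), ?_, ?_⟩ <;>
    · simp only [instrRule, hdh, mkRule]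
      funext i
      rcases i with _ | j
      · simp [encCfg]
      · by_cases hj : j = k₀
        · subst hj; simp [encCfg]
        · simp [encCfg, hj]
  constructor
  · intro h
    have hR := reflTransGen_of_eqvGen hdet (hself d hd hdh) h
    clear h
    generalize hx : encCfg num e (n + 1) c = x at hR
    induction hR using Relation.ReflTransGen.head_induction_on generalizing c with
    | refl =>
      -- the code of `c` is that of `d`, so its state is that of `d`
      refine ⟨c, hc, ?_, hx, .refl⟩
      have := congrFun hx none
      have : num c.1 = num d.1 := by simpa [encCfg] using this
      rw [hnum hc hd this, hdh]
    | head h1 h2 ih =>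
      cases hs : step prog c with
      | none =>
        have hch : prog c.1 = halt := by
          unfold step at hs
          cases hp : prog c.1 <;> simp [hp] at hs; rfl
        have := hdet _ _ _ h1 (hx ▸ hself c hc hch)
        exact ih c hc (hx.trans this.symm)
      | some c' =>
        have h3 := rel_of_step prog T num M (n + 1) e k₀ hc (Option.mem_def.2 hs)
        rw [hx] at h3
        obtain ⟨d', p1, p2, p3, p4⟩ := ih c' (hT c c' hc hs) (hdet _ _ _ h3 h1)
        exact ⟨d', p1, p2, p3, .head hs p4⟩
  · rintro ⟨d', -, -, h, hreach⟩
    rw [← h]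
    clear h
    have : d'.1 ∈ T ∧ Relation.EqvGen r (encCfg num e (n + 1) c) (encCfg num e (n + 1) d') := by
      induction hreach with
      | refl => exact ⟨hc, .refl _⟩
      | tail _ h2 ih =>
        exact ⟨hT _ _ ih.1 h2, .trans _ _ _ ih.2
          (.rel _ _ (rel_of_step prog T num M (n + 1) e k₀ ih.1 h2))⟩
    exact this.2

theorem encStack_inj {e : Γ → ℕ} (he : Function.Injective e) {n : ℕ} (hen : ∀ a, e a < n) :
    Function.Injective (encStack e (n + 1)) := by
  intro l
  induction l with
  | nil =>
    intro l' h
    cases l' with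
    | nil => rfl
    | cons a l' =>
      have h' : digit e none + ((n : ℤ) + 1) * 0 =
        digit e (some a) + (n + 1) * encStack e (n + 1) l' := by simpa [encStack, digit] using h
      have := digit_inj he (euclid_unique (digit_nonneg e _) (digit_lt hen _) (digit_nonneg e _)
        (digit_lt hen _) h')
      cases this
  | cons a l ih =>
    intro l' h
    cases l' with
    | nil =>
      have h' : digit e none + ((n : ℤ) + 1) * 0 =
        digit e (some a) + (n + 1) * encStack e (n + 1) l := by
          simpa [encStack, digit] using h.symm
      have := digit_inj he (euclid_unique (digit_nonneg e _) (digit_lt hen _) (digit_nonneg e _)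
        (digit_lt hen _) h')
      cases this
    | cons b l' =>
      simp only [encStack] at h
      have := digit_inj he (euclid_unique (digit_nonneg e _) (digit_lt hen _) (digit_nonneg e _)
        (digit_lt hen _) h)
      cases this
      have h' := mul_left_cancel₀ (by positivity) (add_left_cancel h)
      rw [ih h']

end StackInstr

/-! ### An undecidable reachability problem for piecewise affine systems -/

section Machine

open Turing Turing.PartrecToTM2

/-- The states of the microstep machine: a remaining statement (`none` when the machine has
stopped) together with the value of the register. -/
abbrev MicroState : Type :=
  Option (TM2.Stmt (fun _ : K' => Γ') Λ' (Option Γ')) × (Option Γ' : Type)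

/-- The machine of `Turing.PartrecToTM2` with its statements cut into single instructions. -/
def microProg : MicroState → StackInstr MicroState K' Γ'
  | (none, _) => .halt
  | (some (.push k f q), v) => .push k (f v) (some q, v)
  | (some (.peek k f q), v) => .peek k fun o => (some q, f v o)
  | (some (.pop k f q), v) => .pop k fun o => (some q, f v o)
  | (some (.load a q), v) => .peek K'.main fun _ => (some q, a v)
  | (some (.branch f q₁ q₂), v) => .peek K'.main fun _ => (some (cond (f v) q₁ q₂), v)
  | (some (.goto l), v) => .peek K'.main fun _ => (some (tr (l v)), v)
  | (some .halt, v) => .peek K'.main fun _ => (none, v)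

/-- A configuration of the original machine as one of the microstep machine. -/
def toMicro : Cfg' → MicroState × (K' → List Γ')
  | ⟨none, v, S⟩ => ((none, v), S)
  | ⟨some l, v, S⟩ => ((some (tr l), v), S)

theorem micro_stepAux (q : TM2.Stmt (fun _ : K' => Γ') Λ' (Option Γ')) (v : Option Γ')
    (S : K' → List Γ') :
    StateTransition.Reaches₁ (StackInstr.step microProg) ((some q, v), S)
      (toMicro (TM2.stepAux q v S)) := by
  induction q generalizing v S with
  | push k f q ih | peek k f q ih | pop k f q ih =>
    exact .head (by simp [StackInstr.step, microProg]) (ih _ _)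
  | load a q ih => exact .head (by simp [StackInstr.step, microProg]) (ih _ _)
  | branch f q₁ q₂ ih₁ ih₂ =>
    cases hf : f v
    · refine .head (b := ((some q₂, v), S)) (by simp [StackInstr.step, microProg, hf]) ?_
      rw [TM2.stepAux, hf]
      exact ih₂ v S
    · refine .head (b := ((some q₁, v), S)) (by simp [StackInstr.step, microProg, hf]) ?_
      rw [TM2.stepAux, hf]
      exact ih₁ v S
  | goto l => exact .single (by simp [StackInstr.step, microProg, toMicro])
  | halt => exact .single (by simp [StackInstr.step, microProg, toMicro])

theorem micro_respects : StateTransition.Respects (TM2.step tr) (StackInstr.step microProg)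
    (fun a b => toMicro a = b) := by
  rintro ⟨_ | l, v, S⟩ _ rfl
  · simp [TM2.step, StackInstr.step, toMicro, microProg]
  · exact ⟨_, rfl, micro_stepAux _ _ _⟩

/-- The states of the microstep machine that occur when running the code `c`. -/
noncomputable def microSupp (c : ToPartrec.Code) : Finset MicroState :=
  TM2.stmts tr (codeSupp c Cont'.halt) ×ˢ Finset.univ

theorem microSupp_step (c : ToPartrec.Code) (x y : MicroState × (K' → List Γ'))
    (hx : x.1 ∈ microSupp c) (h : y ∈ StackInstr.step microProg x) : y.1 ∈ microSupp c := by
  have key : ∀ q : TM2.Stmt (fun _ : K' => Γ') Λ' (Option Γ'), ∀ q' ∈ TM2.stmts₁ q,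
      some q ∈ TM2.stmts tr (codeSupp c Cont'.halt) →
      some q' ∈ TM2.stmts tr (codeSupp c Cont'.halt) :=
    fun q q' h => TM2.stmts_trans h
  obtain ⟨⟨_ | q, v⟩, S⟩ := x
  · simp [StackInstr.step, microProg] at h
  · simp only [microSupp, Finset.mem_product, Finset.mem_univ, and_true] at hx ⊢
    cases q with
    | push k f q | peek k f q | pop k f q =>
      simp only [StackInstr.step, microProg, Option.mem_def, Option.some.injEq] at h
      subst h
      exact key _ _ (by simp [TM2.stmts₁, TM2.stmts₁_self]) hx
    | load a q =>
      simp only [StackInstr.step, microProg, Option.mem_def, Option.some.injEq] at h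
      subst h
      exact key _ _ (by simp [TM2.stmts₁, TM2.stmts₁_self]) hx
    | branch f q₁ q₂ =>
      simp only [StackInstr.step, microProg, Option.mem_def, Option.some.injEq] at h
      subst h
      exact key _ _ (by cases f v <;> simp [TM2.stmts₁, TM2.stmts₁_self]) hx
    | goto l =>
      simp only [StackInstr.step, microProg, Option.mem_def, Option.some.injEq] at h
      subst h
      have h1 := @TM2.stmts_supportsStmt _ _ _ _ ⟨trNormal c Cont'.halt⟩ _ _ _
        (tr_supports c Cont'.halt) hx
      have h2 : l v ∈ codeSupp c Cont'.halt := h1 v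
      classical
      exact Finset.some_mem_insertNone.2 (Finset.mem_biUnion.2 ⟨_, h2, TM2.stmts₁_self⟩)
    | halt =>
      simp only [StackInstr.step, microProg, Option.mem_def, Option.some.injEq] at h
      subst h
      simp [TM2.stmts]

/-- A numbering of the stack alphabet. -/
def symNum : Γ' → ℕ
  | .consₗ => 0
  | .cons => 1
  | .bit0 => 2
  | .bit1 => 3

theorem symNum_inj : Function.Injective symNum := by
  intro a b; cases a <;> cases b <;> simp [symNum]

theorem symNum_lt (a : Γ') : symNum a < 4 := by cases a <;> simp [symNum]

/-- The code of the stack which holds the one-element list `[m]`. -/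
def inputCode (m : ℕ) : ℕ := (StackInstr.encStack symNum 5 (trList [m])).toNat

theorem encStack_nonneg (l : List Γ') : 0 ≤ StackInstr.encStack symNum 5 l := by
  induction l with
  | nil => exact le_rfl
  | cons a l ih => have := StackInstr.digit_nonneg symNum (some a); simp only [StackInstr.encStack]; omega

theorem trNat_bit1 (m : ℕ) : trNat (2 * m + 1) = Γ'.bit1 :: trNat m := by
  have : ((2 * m + 1 : ℕ) : Num) = (m : Num).bit1 := by
    rw [← Num.to_nat_inj]
    simp only [Num.to_of_nat, Num.cast_bit1]
  unfold trNat
  rw [this]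
  cases (m : Num) <;> rfl

theorem trNat_bit0 (m : ℕ) (hm : m ≠ 0) : trNat (2 * m) = Γ'.bit0 :: trNat m := by
  have : ((2 * m : ℕ) : Num) = (m : Num).bit0 := by
    rw [← Num.to_nat_inj]
    simp only [Num.to_of_nat, Num.cast_bit0]
  unfold trNat
  rw [this]
  have h : (m : Num) ≠ 0 := by exact_mod_cast hm
  cases hk : (m : Num) with
  | zero => exact absurd hk h
  | pos p => rfl

theorem inputCode_eq (m : ℕ) : inputCode m =
    if m = 0 then 2 else (if m % 2 = 0 then 3 else 4) + 5 * inputCode (m / 2) := by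
  have h0 := encStack_nonneg (trList [m / 2])
  split_ifs with h1 h2
  · subst h1; simp [inputCode, StackInstr.encStack, StackInstr.digit, symNum]
  · obtain ⟨k, rfl⟩ : ∃ k, m = 2 * k := ⟨m / 2, by omega⟩
    have hk : 2 * k / 2 = k := by omega
    rw [hk] at h0 ⊢
    simp only [inputCode, trList, trNat_bit0 k (by omega), List.cons_append] at h0 ⊢
    simp only [StackInstr.encStack.eq_2 _ _ Γ'.bit0, StackInstr.digit, symNum]
    push_cast; omega
  · obtain ⟨k, rfl⟩ : ∃ k, m = 2 * k + 1 := ⟨m / 2, by omega⟩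
    have hk : (2 * k + 1) / 2 = k := by omega
    rw [hk] at h0 ⊢
    simp only [inputCode, trList, trNat_bit1 k, List.cons_append] at h0 ⊢
    simp only [StackInstr.encStack.eq_2 _ _ Γ'.bit1, StackInstr.digit, symNum]
    push_cast; omega

theorem inputCode_primrec : Primrec inputCode := by
  let g : Unit → List ℕ → Option ℕ := fun _ l =>
    if l.length = 0 then some 2 else
      some ((if l.length % 2 = 0 then 3 else 4) + 5 * (l[l.length / 2]?).getD 0)
  have hlen : Primrec fun p : Unit × List ℕ => p.2.length := Primrec.list_length.comp .snd
  have hg : Primrec₂ g := by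
    refine Primrec.ite (Primrec.eq.comp hlen (.const 0)) (.const _) (Primrec.option_some.comp ?_)
    refine Primrec.nat_add.comp (Primrec.ite (Primrec.eq.comp
      (Primrec.nat_mod.comp hlen (.const 2)) (.const 0)) (.const 3) (.const 4)) ?_
    refine Primrec.nat_mul.comp (.const 5) (Primrec.option_getD.comp ?_ (.const 0))
    exact Primrec.list_getElem?.comp .snd (Primrec.nat_div.comp hlen (.const 2))
  have := Primrec.nat_strong_rec (fun (_ : Unit) m => inputCode m) hg (by
    intro _ m
    simp only [g, List.length_map, List.length_range]
    rw [inputCode_eq m]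
    split_ifs with h1
    · rfl
    · simp [Nat.div_lt_self (Nat.pos_of_ne_zero h1)]
    · simp [Nat.div_lt_self (Nat.pos_of_ne_zero h1)])
  exact this.comp (.const ()) .id

/-- A partial recursive function with only possible value `0` and undecidable domain. -/
theorem exists_halting_code : ∃ c : ToPartrec.Code,
    (∀ m v, v ∈ c.eval [m] → v = [0]) ∧ ¬ ComputablePred fun m : ℕ => (c.eval [m]).Dom := by
  let f : ℕ →. ℕ := fun m => (Nat.Partrec.Code.eval (Denumerable.ofNat Nat.Partrec.Code m) 0).map
    fun _ => 0
  have hf : Partrec f := by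
    refine Partrec.map ?_ ((Computable.const 0).to₂)
    exact Nat.Partrec.Code.eval_part.comp (Computable.ofNat _) (Computable.const 0)
  have hf' : Nat.Partrec' fun v : List.Vector ℕ 1 => f v.head :=
    Nat.Partrec'.of_part (hf.comp Primrec.vector_head.to_comp)
  obtain ⟨c, hc⟩ := ToPartrec.Code.exists_code hf'
  have hc' : ∀ m, c.eval [m] = pure <$> f m := fun m => hc ⟨[m], rfl⟩
  refine ⟨c, ?_, ?_⟩
  · intro m v hv
    rw [hc'] at hv
    simp only [Part.map_eq_map, Part.mem_map_iff, f] at hv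
    obtain ⟨_, ⟨_, _, rfl⟩, rfl⟩ := hv
    rfl
  · intro h
    apply ComputablePred.halting_problem 0
    refine ComputablePred.computable_of_manyOneReducible
      ⟨fun c' : Nat.Partrec.Code => Encodable.encode c', Computable.encode, fun c' => ?_⟩ h
    rw [hc']
    simp [f]

end Machine

open Turing Turing.PartrecToTM2 in
/-- There is a piecewise affine system, given by finitely many rules, for which it is undecidable
whether a point on a fixed discrete ray is equivalent to a fixed point. -/
theorem exists_affine_undecidable : ∃ (ι R : Type) (_ : Finite ι) (_ : Finite R) (_ : DecidableEq ι)
    (rule : R → AffineRule ι) (x₀ xf : ι → ℤ) (i₀ : ι),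
    (∀ ρ i, (rule ρ).srcScale i ≠ 0 ∧ (rule ρ).tgtScale i ≠ 0) ∧
    ¬ ComputablePred fun ν : ℕ =>
      Relation.EqvGen (AffineRel rule) (x₀ + Pi.single i₀ (ν : ℤ)) xf := by
  classical
  obtain ⟨c, hc, hund⟩ := exists_halting_code
  set T := microSupp c with hT
  obtain ⟨num, hnum, M, hM⟩ : ∃ num : MicroState → ℕ, Set.InjOn num T ∧
      ∃ M : ℕ, ∀ s ∈ T, num s < M := by
    refine ⟨fun s => if h : s ∈ T then T.equivFin ⟨s, h⟩ else 0, ?_, T.card + 1, ?_⟩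
    · intro a ha b hb hab
      have ha' : a ∈ T := ha
      have hb' : b ∈ T := hb
      simp only [ha', hb', dif_pos] at hab
      simpa using T.equivFin.injective (Fin.ext hab)
    · intro s hs
      simp only [hs, dif_pos]
      omega
  have hfin : Finite K' :=
    Finite.of_surjective (fun i : Fin 4 => ![K'.main, K'.rev, K'.aux, K'.stack] i) fun k => by
      cases k
      exacts [⟨0, rfl⟩, ⟨1, rfl⟩, ⟨2, rfl⟩, ⟨3, rfl⟩]
  let rule := fun ρ : T × Option Γ' =>
    StackInstr.instrRule microProg num symNum M 5 K'.main ρ.1 ρ.2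
  let enc := StackInstr.encCfg (K := K') num symNum 5
  let start : ℕ → MicroState × (K' → List Γ') := fun m => toMicro (init c [m])
  let final := toMicro (halt [0])
  let x₀ : Option K' → ℤ := fun i => i.elim (num (start 0).1) fun _ => 0
  have hstart : ∀ m, enc (start m) = x₀ + Pi.single (some K'.main) (inputCode m : ℤ) := by
    intro m
    funext i
    rcases i with _ | k
    · simp [enc, StackInstr.encCfg, x₀, start, toMicro, init]
    · have h0 := encStack_nonneg (trList [m])
      cases k <;> simp [enc, StackInstr.encCfg, x₀, start, toMicro, init, StackInstr.encStack, inputCode]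
      simpa using h0
  have hsT : ∀ m, (start m).1 ∈ T := by
    intro m
    refine Finset.mem_product.2 ⟨Finset.some_mem_insertNone.2 (Finset.mem_biUnion.2 ?_),
      Finset.mem_univ _⟩
    exact ⟨_, codeSupp_self _ _ (trStmts₁_self _), TM2.stmts₁_self⟩
  have hfT : final.1 ∈ T :=
    Finset.mem_product.2 ⟨Finset.none_mem_insertNone, Finset.mem_univ _⟩
  refine ⟨Option K', T × Option Γ', inferInstance, inferInstance, inferInstance, rule, x₀,
    enc final, some K'.main, ?_, ?_⟩
  · intro ρ i
    refine StackInstr.instrRule_ne _ _ _ ?_ (by norm_num) _ _ _ i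
    have := hM _ ρ.1.2
    omega
  · intro hcomp
    apply hund
    refine ComputablePred.computable_of_manyOneReducible
      ⟨inputCode, inputCode_primrec.to_comp, fun m => Iff.symm ?_⟩ hcomp
    rw [← hstart m]
    have hdom := StateTransition.tr_eval_dom micro_respects (a₁ := init c [m]) rfl
    have htr : (StateTransition.eval (TM2.step tr) (init c [m])).Dom ↔ (c.eval [m]).Dom := by
      rw [tr_eval]; rfl
    have h5 : (5 : ℤ) = ((4 : ℕ) : ℤ) + 1 := by norm_num
    simp only [rule, enc, h5]
    refine (StackInstr.eqvGen_iff_reaches microProg T (fun a b => microSupp_step c a b) num hnum hM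
      symNum_inj symNum_lt K'.main (start m) final (hsT m) hfT rfl).trans ?_
    rw [← htr, ← hdom]
    constructor
    · rintro ⟨d', -, hd, -, hr⟩
      have : d' ∈ StateTransition.eval (StackInstr.step microProg) (start m) :=
        StateTransition.mem_eval.2 ⟨hr, by simp [StackInstr.step, hd]⟩
      exact this.1
    · intro h
      rw [hdom, htr] at h
      obtain ⟨v, hv⟩ := Part.dom_iff_mem.1 h
      have := hc m v hv
      subst this
      have h2 : halt [0] ∈ StateTransition.eval (TM2.step tr) (init c [m]) := by
        rw [tr_eval]; exact Part.mem_map _ hv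
      obtain ⟨b, hb, hb2⟩ := StateTransition.tr_eval micro_respects (a₂ := start m) rfl h2
      subst hb
      exact ⟨final, hfT, rfl, rfl, (StateTransition.mem_eval.1 hb2).1⟩

/-! ### Encoding piecewise affine systems in finite presentations -/

section MonomialProduct

open scoped commutatorElement

variable {ι : Type} [Fintype ι] {H : Type*} [Group H]

/-- The product of the powers `y i ^ ξ i`, in some fixed order. -/
noncomputable def monom (y : ι → H) (ξ : ι → ℤ) : H :=
  (Finset.univ.toList.map fun i => y i ^ ξ i).prod

theorem map_monom {H' : Type*} [Group H'] (φ : H →* H') (y : ι → H) (ξ : ι → ℤ) :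
    φ (monom y ξ) = monom (fun i => φ (y i)) ξ := by
  simp [monom, map_list_prod, Function.comp_def]

theorem monom_add {y : ι → H} (hy : ∀ i j, Commute (y i) (y j)) (ξ η : ι → ℤ) :
    monom y (ξ + η) = monom y ξ * monom y η := by
  unfold monom
  generalize (Finset.univ : Finset ι).toList = l
  induction l with
  | nil => simp
  | cons a l ih =>
    have hc : Commute (y a ^ η a) (l.map fun i => y i ^ ξ i).prod := by
      refine Commute.list_prod_right _ _ fun b hb => ?_
      obtain ⟨i, -, rfl⟩ := List.mem_map.1 hb
      exact ((hy a i).zpow_left _).zpow_right _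
    simp only [List.map_cons, List.prod_cons, ih]
    rw [Pi.add_apply, zpow_add, mul_assoc, ← mul_assoc (y a ^ η a), hc.eq]
    simp only [mul_assoc]

theorem monom_single [DecidableEq ι] (y : ι → H) (i : ι) (n : ℤ) :
    monom y (Pi.single i n) = y i ^ n := by
  unfold monom
  have key : ∀ l : List ι, l.Nodup →
      (l.map fun j => y j ^ (Pi.single i n : ι → ℤ) j).prod = if i ∈ l then y i ^ n else 1 := by
    intro l
    induction l with
    | nil => simp
    | cons a l ih =>
      intro hl
      rw [List.nodup_cons] at hl
      rw [List.map_cons, List.prod_cons, ih hl.2]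
      by_cases h : i = a
      · subst h; simp [hl.1]
      · simp [h, Ne.symm h]
  rw [key _ (Finset.nodup_toList _)]
  simp

theorem conj_monom {y y' : ι → H} {s : H} {p r : ι → ℤ}
    (h : ∀ i, s * y i ^ p i * s⁻¹ = y' i ^ r i) (c : ι → ℤ) :
    s * monom y (p * c) * s⁻¹ = monom y' (r * c) := by
  have := map_monom (MulAut.conj s).toMonoidHom y (p * c)
  simp only [MulEquiv.toMonoidHom_eq_coe, MonoidHom.coe_coe, MulAut.conj_apply] at this
  rw [this]
  unfold monom
  congr 2
  funext i
  simp only [Pi.mul_apply, zpow_mul, ← h i]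
  rw [conj_zpow, conj_zpow, ← zpow_mul]

/-- The conjugate of `t` by the monomial with exponent vector `ξ`. -/
noncomputable def shiftConj (y : ι → H) (t : H) (ξ : ι → ℤ) : H :=
  monom y ξ * t * (monom y ξ)⁻¹

theorem map_shiftConj {H' : Type*} [Group H'] (φ : H →* H') (y : ι → H) (t : H) (ξ : ι → ℤ) :
    φ (shiftConj y t ξ) = shiftConj (fun i => φ (y i)) (φ t) ξ := by
  simp [shiftConj, map_monom]

theorem shiftConj_add {y : ι → H} (hy : ∀ i j, Commute (y i) (y j)) (t : H) (ξ η : ι → ℤ) :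
    shiftConj y t (ξ + η) = monom y η * shiftConj y t ξ * (monom y η)⁻¹ := by
  rw [add_comm, shiftConj, monom_add hy, shiftConj]
  group

variable {Ru : Type} (rule : Ru → AffineRule ι) (xf : ι → ℤ)

/-- The indices of the relators of the presentation encoding a piecewise affine system. -/
abbrev RelIndex (ι Ru : Type) : Type := (ι × ι) ⊕ Unit ⊕ Ru ⊕ (Ru × ι) ⊕ Ru

/-- The relators encoding a piecewise affine system, evaluated at elements `y i`, `t`, `k`, `s ρ`
of a group: the `y i` commute, `k` commutes with `t` shifted by `xf`, and conjugation by `s ρ` fixes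
`k` and follows the rule `ρ` on the shifts of `t`. -/
noncomputable def encRel (y : ι → H) (t k : H) (s : Ru → H) : RelIndex ι Ru → H
  | .inl (i, j) => ⁅y i, y j⁆
  | .inr (.inl _) => ⁅k, shiftConj y t xf⁆
  | .inr (.inr (.inl ρ)) =>
    s ρ * shiftConj y t (rule ρ).src * (s ρ)⁻¹ * (shiftConj y t (rule ρ).tgt)⁻¹
  | .inr (.inr (.inr (.inl (ρ, i)))) =>
    s ρ * y i ^ (rule ρ).srcScale i * (s ρ)⁻¹ * (y i ^ (rule ρ).tgtScale i)⁻¹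
  | .inr (.inr (.inr (.inr ρ))) => ⁅s ρ, k⁆

theorem map_encRel {H' : Type*} [Group H'] (φ : H →* H') (y : ι → H) (t k : H) (s : Ru → H)
    (i : RelIndex ι Ru) :
    φ (encRel rule xf y t k s i) =
      encRel rule xf (fun i => φ (y i)) (φ t) (φ k) (fun ρ => φ (s ρ)) i := by
  rcases i with i | i | i | i | i <;> simp [encRel, map_shiftConj, map_commutatorElement]

variable {rule xf}

/-- In a group satisfying the relations, `k` commutes with the shifts of `t` by all points
equivalent to `xf`. -/
theorem commute_of_eqvGen {y : ι → H} {t k : H} {s : Ru → H}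
    (h : ∀ i, encRel rule xf y t k s i = 1) {ξ : ι → ℤ}
    (hξ : Relation.EqvGen (AffineRel rule) ξ xf) : Commute k (shiftConj y t ξ) := by
  have hy : ∀ i j, Commute (y i) (y j) := fun i j =>
    commutatorElement_eq_one_iff_commute.1 (h (.inl (i, j)))
  have hf : Commute k (shiftConj y t xf) := commutatorElement_eq_one_iff_commute.1 (h (.inr (.inl ())))
  have ht : ∀ ρ, s ρ * shiftConj y t (rule ρ).src * (s ρ)⁻¹ = shiftConj y t (rule ρ).tgt :=
    fun ρ => mul_inv_eq_one.1 (h (.inr (.inr (.inl ρ))))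
  have hx : ∀ ρ i, s ρ * y i ^ (rule ρ).srcScale i * (s ρ)⁻¹ = y i ^ (rule ρ).tgtScale i :=
    fun ρ i => mul_inv_eq_one.1 (h (.inr (.inr (.inr (.inl (ρ, i))))))
  have hk : ∀ ρ, s ρ * k * (s ρ)⁻¹ = k := fun ρ => by
    rw [(commutatorElement_eq_one_iff_commute.1 (h (.inr (.inr (.inr (.inr ρ)))))).eq,
      mul_inv_cancel_right]
  have key : ∀ ξ η, AffineRel rule ξ η →
      (Commute k (shiftConj y t ξ) ↔ Commute k (shiftConj y t η)) := by
    rintro _ _ ⟨ρ, c, rfl, rfl⟩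
    have h1 : s ρ * shiftConj y t ((rule ρ).src + (rule ρ).srcScale * c) * (s ρ)⁻¹ =
        shiftConj y t ((rule ρ).tgt + (rule ρ).tgtScale * c) := by
      rw [shiftConj_add hy, shiftConj_add hy, ← conj_monom (hx ρ) c, ← ht]
      group
    rw [← h1]
    nth_rw 2 [← hk ρ]
    exact (Commute.conj_iff (s ρ)).symm
  have key' : ∀ ξ η, Relation.EqvGen (AffineRel rule) ξ η →
      (Commute k (shiftConj y t ξ) ↔ Commute k (shiftConj y t η)) := by
    intro ξ η h
    induction h with
    | rel _ _ h => exact key _ _ h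
    | refl => rfl
    | symm _ _ _ ih => exact ih.symm
    | trans _ _ _ _ _ ih1 ih2 => exact ih1.trans ih2
  exact (key' _ _ hξ).2 hf

end MonomialProduct

/-! ### A central extension recording which shifts commute -/

section TwHeis

variable {Ξ : Type} [AddCommGroup Ξ]

/-- The bilinear form on `Ξ →₀ ℤ` with value `χ (m - j)` on the basis vectors `j`, `m`. -/
noncomputable def shiftForm (χ : Ξ → ℤ) : (Ξ →₀ ℤ) →ₗ[ℤ] (Ξ →₀ ℤ) →ₗ[ℤ] ℤ :=
  Finsupp.linearCombination ℤ fun j => Finsupp.linearCombination ℤ fun m => χ (m - j)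

theorem shiftForm_single (χ : Ξ → ℤ) (j m : Ξ) (a b : ℤ) :
    shiftForm χ (Finsupp.single j a) (Finsupp.single m b) = a * (b * χ (m - j)) := by
  simp [shiftForm]

theorem shiftForm_mapDomain {Ξ' : Type} [AddCommGroup Ξ'] {χ : Ξ → ℤ} {χ' : Ξ' → ℤ}
    {P Q : Ξ' → Ξ} (h : ∀ j m, χ (Q m - P j) = χ' (m - j)) (g f : Ξ' →₀ ℤ) :
    shiftForm χ (g.mapDomain P) (f.mapDomain Q) = shiftForm χ' g f := by
  induction g using Finsupp.induction_linear with
  | zero => simp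
  | add g g' h1 h2 => simp [Finsupp.mapDomain_add, h1, h2]
  | single j a =>
    induction f using Finsupp.induction_linear with
    | zero => simp
    | add f f' h1 h2 => simp only [Finsupp.mapDomain_add, map_add, h1, h2]
    | single m b => simp only [Finsupp.mapDomain_single, shiftForm_single, h]

/-- For `χ : Ξ → ℤ`, the group generated by shifts `t m` and `k j` (`m j : Ξ`), a central element
`z`, and a copy of `Ξ` permuting the shifts, with `t m`, `t m'` commuting, `k j`, `k j'` commuting,
and `k j * t m = z ^ χ (m - j) * t m * k j`. The components are the exponents of the `t m`, of the
`k j`, of `z`, and the part in `Ξ`. -/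
@[ext]
structure TwHeis (χ : Ξ → ℤ) where
  f : Ξ →₀ ℤ
  g : Ξ →₀ ℤ
  c : ℤ
  x : Ξ

namespace TwHeis

variable {χ : Ξ → ℤ}

/-- The translation action of `Ξ` on `Ξ →₀ ℤ`. -/
noncomputable def shift (x : Ξ) (f : Ξ →₀ ℤ) : Ξ →₀ ℤ := f.mapDomain (x + ·)

theorem shift_add (x : Ξ) (f f' : Ξ →₀ ℤ) : shift x (f + f') = shift x f + shift x f' :=
  Finsupp.mapDomain_add

theorem shift_shift (x y : Ξ) (f : Ξ →₀ ℤ) : shift (x + y) f = shift x (shift y f) := by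
  rw [shift, shift, shift, ← Finsupp.mapDomain_comp]
  congr 1
  funext m
  exact add_assoc _ _ _

theorem shift_zero (f : Ξ →₀ ℤ) : shift 0 f = f := by
  simp only [shift, zero_add]
  exact Finsupp.mapDomain_id

theorem shift_of_zero (x : Ξ) : shift x 0 = 0 := Finsupp.mapDomain_zero

theorem shiftForm_shift (x : Ξ) (g f : Ξ →₀ ℤ) :
    shiftForm χ (shift x g) (shift x f) = shiftForm χ g f :=
  shiftForm_mapDomain (fun j m => by rw [add_sub_add_left_eq_sub]) g f

noncomputable instance : Mul (TwHeis χ) :=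
  ⟨fun a b => ⟨a.f + shift a.x b.f, a.g + shift a.x b.g,
    a.c + b.c + shiftForm χ a.g (shift a.x b.f), a.x + b.x⟩⟩

instance : One (TwHeis χ) := ⟨⟨0, 0, 0, 0⟩⟩

noncomputable instance : Inv (TwHeis χ) :=
  ⟨fun a => ⟨-shift (-a.x) a.f, -shift (-a.x) a.g, -a.c + shiftForm χ a.g a.f, -a.x⟩⟩

theorem mul_def (a b : TwHeis χ) : a * b = ⟨a.f + shift a.x b.f, a.g + shift a.x b.g,
    a.c + b.c + shiftForm χ a.g (shift a.x b.f), a.x + b.x⟩ := rfl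

theorem one_def : (1 : TwHeis χ) = ⟨0, 0, 0, 0⟩ := rfl

noncomputable instance : Group (TwHeis χ) :=
  Group.ofLeftAxioms
    (by
      intro a b c
      simp only [mul_def]
      ext1
      · simp only [shift_add, shift_shift, add_assoc]
      · simp only [shift_add, shift_shift, add_assoc]
      · simp only [shift_add, shift_shift, map_add, LinearMap.add_apply, shiftForm_shift]
        ring
      · exact add_assoc _ _ _)
    (by
      intro a
      simp [mul_def, one_def, shift_zero])
    (by
      intro a
      change (⟨-shift (-a.x) a.f + shift (-a.x) a.f, -shift (-a.x) a.g + shift (-a.x) a.g,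
        -a.c + shiftForm χ a.g a.f + a.c + shiftForm χ (-shift (-a.x) a.g) (shift (-a.x) a.f),
        -a.x + a.x⟩ : TwHeis χ) = ⟨0, 0, 0, 0⟩
      simp only [map_neg, LinearMap.neg_apply, shiftForm_shift, neg_add_cancel]
      congr 1
      ring)

variable (χ) in
/-- The generator `t m`. -/
noncomputable def tGen (m : Ξ) : TwHeis χ := ⟨Finsupp.single m 1, 0, 0, 0⟩

variable (χ) in
/-- The generator `k`. -/
noncomputable def kGen : TwHeis χ := ⟨0, Finsupp.single 0 1, 0, 0⟩

variable (χ) in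
/-- The powers of the central generator. -/
def zPow (c : ℤ) : TwHeis χ := ⟨0, 0, c, 0⟩

variable (χ) in
/-- The generators from `Ξ`. -/
def xGen : Multiplicative Ξ →* TwHeis χ where
  toFun x := ⟨0, 0, 0, x.toAdd⟩
  map_one' := rfl
  map_mul' x y := by simp [mul_def, shift_of_zero]

theorem xGen_apply (x : Multiplicative Ξ) : xGen χ x = ⟨0, 0, 0, x.toAdd⟩ := rfl

theorem xGen_mul_tGen (x m : Ξ) :
    xGen χ (.ofAdd x) * tGen χ m * (xGen χ (.ofAdd x))⁻¹ = tGen χ (x + m) := by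
  rw [mul_inv_eq_iff_eq_mul]
  simp [xGen_apply, tGen, mul_def, shift, Finsupp.mapDomain_single, Finsupp.mapDomain_zero]

open scoped commutatorElement in
theorem commutator_kGen_tGen (m : Ξ) : ⁅kGen χ, tGen χ m⁆ = zPow χ (χ m) := by
  rw [commutatorElement_def, mul_inv_eq_iff_eq_mul, mul_inv_eq_iff_eq_mul]
  simp [kGen, tGen, zPow, mul_def, shift, Finsupp.mapDomain_single, Finsupp.mapDomain_zero,
    shiftForm_single]

theorem zPow_commute (c : ℤ) (a : TwHeis χ) : Commute a (zPow χ c) := by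
  simp only [Commute, SemiconjBy, mul_def, zPow, shift_of_zero, shift_zero]
  simp [add_comm]

theorem zPow_pow (c j : ℤ) : zPow χ c ^ j = zPow χ (j * c) := by
  have h : ∀ a b, zPow χ a * zPow χ b = zPow χ (a + b) := by
    intro a b
    simp [mul_def, zPow, shift_of_zero]
  let φ : Multiplicative ℤ →* TwHeis χ :=
    { toFun := fun a => zPow χ a.toAdd
      map_one' := rfl
      map_mul' := fun a b => (h _ _).symm }
  have := map_zpow φ (.ofAdd c) j
  rw [← ofAdd_zsmul] at this
  exact this.symm

/-- An affine injection `m ↦ a + P m` with `χ (a + P m) = χ' m` induces a map of groups. -/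
noncomputable def affineMap {χ' : Ξ → ℤ} (a : Ξ) (P : Ξ →+ Ξ) (h : ∀ m, χ (a + P m) = χ' m) :
    TwHeis χ' →* TwHeis χ where
  toFun u := ⟨u.f.mapDomain fun m => a + P m, u.g.mapDomain P, u.c, P u.x⟩
  map_one' := by
    change (⟨Finsupp.mapDomain _ 0, Finsupp.mapDomain _ 0, 0, P 0⟩ : TwHeis χ) = ⟨0, 0, 0, 0⟩
    simp [Finsupp.mapDomain_zero]
  map_mul' u v := by
    have h1 : ∀ (x : Ξ) (f : Ξ →₀ ℤ), (shift x f).mapDomain (fun m => a + P m) =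
        shift (P x) (f.mapDomain fun m => a + P m) := by
      intro x f
      rw [shift, shift, ← Finsupp.mapDomain_comp, ← Finsupp.mapDomain_comp]
      congr 1
      funext m
      simp [add_left_comm]
    have h2 : ∀ (x : Ξ) (f : Ξ →₀ ℤ), (shift x f).mapDomain P = shift (P x) (f.mapDomain P) := by
      intro x f
      rw [shift, shift, ← Finsupp.mapDomain_comp, ← Finsupp.mapDomain_comp]
      congr 1
      funext m
      simp
    simp only [mul_def, Finsupp.mapDomain_add, h1, h2, map_add]
    congr 2
    rw [← h1]
    refine (shiftForm_mapDomain (fun j m => ?_) _ _).symm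
    rw [← h, map_sub, add_sub_assoc]

theorem affineMap_injective {χ' : Ξ → ℤ} {a : Ξ} {P : Ξ →+ Ξ} (h : ∀ m, χ (a + P m) = χ' m)
    (hP : Function.Injective P) : Function.Injective (affineMap a P h) := by
  intro u v huv
  have h1 := congrArg TwHeis.f huv
  have h2 := congrArg TwHeis.g huv
  have h3 := congrArg TwHeis.c huv
  have h4 := congrArg TwHeis.x huv
  exact TwHeis.ext (Finsupp.mapDomain_injective ((add_right_injective a).comp hP) h1)
    (Finsupp.mapDomain_injective hP h2) h3 (hP h4)

end TwHeis

end TwHeis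

/-- Pairs of isomorphic subgroups can be made conjugate, simultaneously for finitely many pairs,
in a larger group. -/
theorem exists_conj_list (l : ℕ) : ∀ (G : Type) [Group G] (A B : Fin l → Subgroup G)
    (φ : ∀ r, A r ≃* B r), ∃ (Q : Type) (_ : Group Q) (j : G →* Q), Function.Injective j ∧
      ∃ s : Fin l → Q, ∀ r (c : A r), s r * j c * (s r)⁻¹ = j (φ r c) := by
  induction l with
  | zero => exact fun G _ _ _ _ => ⟨G, inferInstance, .id G, fun _ _ h => h, Fin.elim0, fun r => r.elim0⟩
  | succ l ih =>
    intro G _ A B φ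
    obtain ⟨Q, _, j, hj, s, hs⟩ := ih G (fun r => A r.succ) (fun r => B r.succ) (fun r => φ r.succ)
    let eA := (A 0).equivMapOfInjective j hj
    let eB := (B 0).equivMapOfInjective j hj
    let ψ := (eA.symm.trans (φ 0)).trans eB
    refine ⟨HNNExtension Q _ _ ψ, inferInstance, (HNNExtension.of).comp j,
      (HNNExtension.of_injective ψ).comp hj, Fin.cons HNNExtension.t fun r => HNNExtension.of (s r), ?_⟩
    intro r
    refine Fin.cases ?_ (fun r => ?_) r
    · intro c
      rw [Fin.cons_zero, mul_inv_eq_iff_eq_mul]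
      have := HNNExtension.t_mul_of (φ := ψ) (eA c)
      simpa [ψ, eA, eB] using this
    · intro c
      rw [Fin.cons_succ]
      have := hs r c
      simp only [MonoidHom.comp_apply, ← map_mul, ← map_inv, this]

theorem exists_conj {R : Type} [Finite R] (G : Type) [Group G] (C : R → Type) [∀ r, Group (C r)]
    (i₁ i₂ : ∀ r, C r →* G) (h₁ : ∀ r, Function.Injective (i₁ r))
    (h₂ : ∀ r, Function.Injective (i₂ r)) :
    ∃ (Q : Type) (_ : Group Q) (j : G →* Q), Function.Injective j ∧
      ∃ s : R → Q, ∀ r (c : C r), s r * j (i₁ r c) * (s r)⁻¹ = j (i₂ r c) := by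
  obtain ⟨n, ⟨e⟩⟩ := Finite.exists_equiv_fin R
  obtain ⟨Q, hQ, j, hj, s, hs⟩ := exists_conj_list n G (fun r => (i₁ (e.symm r)).range)
    (fun r => (i₂ (e.symm r)).range) (fun r => (MonoidHom.ofInjective (h₁ (e.symm r))).symm.trans
      (MonoidHom.ofInjective (h₂ (e.symm r))))
  refine ⟨Q, hQ, j, hj, fun r => s (e r), fun r c => ?_⟩
  have key : ∀ r' (c : C (e.symm r')), s r' * j (i₁ _ c) * (s r')⁻¹ = j (i₂ _ c) := by
    intro r' c
    have := hs r' (MonoidHom.ofInjective (h₁ (e.symm r')) c)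
    simpa only [MulEquiv.trans_apply, MulEquiv.symm_apply_apply, MonoidHom.ofInjective_apply]
      using this
  have h := key (e r)
  generalize hr : e.symm (e r) = r₀ at h
  rw [Equiv.symm_apply_apply] at hr
  subst hr
  exact h c

/-! ### Words that are consequences of finitely many relators for an undecidable set of indices -/

section WordFamily

open scoped commutatorElement

namespace TwHeis

variable {Ξ : Type} [AddCommGroup Ξ] {χ χ' : Ξ → ℤ} {a : Ξ} {P : Ξ →+ Ξ}

theorem affineMap_tGen (h : ∀ m, χ (a + P m) = χ' m) :
    affineMap a P h (tGen χ' 0) = tGen χ a := by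
  simp [affineMap, tGen, Finsupp.mapDomain_single, Finsupp.mapDomain_zero]

theorem affineMap_kGen (h : ∀ m, χ (a + P m) = χ' m) : affineMap a P h (kGen χ') = kGen χ := by
  simp [affineMap, kGen, Finsupp.mapDomain_single, Finsupp.mapDomain_zero]

theorem affineMap_zPow (h : ∀ m, χ (a + P m) = χ' m) (c : ℤ) :
    affineMap a P h (zPow χ' c) = zPow χ c := by
  simp [affineMap, zPow, Finsupp.mapDomain_zero]

theorem affineMap_xGen (h : ∀ m, χ (a + P m) = χ' m) (x : Ξ) :
    affineMap a P h (xGen χ' (.ofAdd x)) = xGen χ (.ofAdd (P x)) := by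
  simp [affineMap, xGen_apply, Finsupp.mapDomain_zero]

theorem monom_xGen {ι : Type} [Fintype ι] [DecidableEq ι] {χ : (ι → ℤ) → ℤ} (ξ : ι → ℤ) :
    monom (fun i => xGen χ (.ofAdd (Pi.single i 1))) ξ = xGen χ (.ofAdd ξ) := by
  rw [← map_monom]
  congr 1
  have h : monom (fun i : ι => Multiplicative.ofAdd (Pi.single i 1 : ι → ℤ)) ξ =
      ∏ i, Multiplicative.ofAdd (Pi.single i 1 : ι → ℤ) ^ ξ i := Finset.prod_map_toList _ _
  rw [h]
  simp only [← ofAdd_zsmul, ← Pi.single_smul, smul_eq_mul, mul_one]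
  rw [← ofAdd_sum, Finset.univ_sum_single]

end TwHeis

/-- For a point `ξ` not equivalent to `xf`, a group satisfying the relations in which the commutator of
`k` with the shift of `t` by `ξ` is central of infinite order. Start with `TwHeis χ`, where `χ` vanishes
exactly on the class of `xf`. As `χ` is invariant under the rules, the source and target maps of a rule
are injections of the same twisted Heisenberg group, and HNN extensions provide the elements `s ρ`. -/
theorem exists_encRel_model {ι Ru : Type} [Fintype ι] [DecidableEq ι] [Finite Ru]
    (rule : Ru → AffineRule ι) (xf : ι → ℤ)
    (hr : ∀ ρ i, (rule ρ).srcScale i ≠ 0 ∧ (rule ρ).tgtScale i ≠ 0) (ξ : ι → ℤ)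
    (hξ : ¬ Relation.EqvGen (AffineRel rule) ξ xf) :
    ∃ (Q : Type) (_ : Group Q) (y : ι → Q) (t k z : Q) (s : Ru → Q),
      (∀ i, encRel rule xf y t k s i = 1) ∧ ⁅k, shiftConj y t ξ⁆ = z ∧ (∀ i, Commute (y i) z) ∧
      Commute t z ∧ Commute k z ∧ (∀ ρ, Commute (s ρ) z) ∧ ∀ j : ℤ, z ^ j = 1 → j = 0 := by
  classical
  let χ : (ι → ℤ) → ℤ := fun η => if Relation.EqvGen (AffineRel rule) η xf then 0 else 1
  have hχ : ∀ η η', Relation.EqvGen (AffineRel rule) η η' → χ η = χ η' := by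
    intro η η' h
    simp only [χ]
    congr 1
    exact propext ⟨fun h' => .trans _ _ _ (.symm _ _ h) h', fun h' => .trans _ _ _ h h'⟩
  let src (ρ : Ru) : (ι → ℤ) →+ (ι → ℤ) := AddMonoidHom.mulLeft (rule ρ).srcScale
  let tgt (ρ : Ru) : (ι → ℤ) →+ (ι → ℤ) := AddMonoidHom.mulLeft (rule ρ).tgtScale
  have hinj : ∀ p : ι → ℤ, (∀ i, p i ≠ 0) → Function.Injective (AddMonoidHom.mulLeft p) := by
    intro p hp u v huv
    funext i
    exact mul_left_cancel₀ (hp i) (congrFun huv i)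
  have htgt : ∀ ρ m, χ ((rule ρ).tgt + tgt ρ m) = χ ((rule ρ).src + src ρ m) := fun ρ m =>
    (hχ _ _ (.rel _ _ ⟨ρ, m, rfl, rfl⟩)).symm
  obtain ⟨Q, hQ, j, hj, s, hs⟩ := exists_conj (TwHeis χ)
    (fun ρ => TwHeis (fun m => χ ((rule ρ).src + src ρ m)))
    (fun ρ => TwHeis.affineMap (rule ρ).src (src ρ) fun _ => rfl)
    (fun ρ => TwHeis.affineMap (rule ρ).tgt (tgt ρ) (htgt ρ))
    (fun ρ => TwHeis.affineMap_injective _ (hinj _ fun i => (hr ρ i).1))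
    (fun ρ => TwHeis.affineMap_injective _ (hinj _ fun i => (hr ρ i).2))
  have hsk : ∀ ρ, Commute (s ρ) (j (TwHeis.kGen χ)) := by
    intro ρ
    have := hs ρ (TwHeis.kGen _)
    rwa [TwHeis.affineMap_kGen, TwHeis.affineMap_kGen, mul_inv_eq_iff_eq_mul] at this
  have hsz : ∀ ρ, Commute (s ρ) (j (TwHeis.zPow χ 1)) := by
    intro ρ
    have := hs ρ (TwHeis.zPow _ 1)
    rwa [TwHeis.affineMap_zPow, TwHeis.affineMap_zPow, mul_inv_eq_iff_eq_mul] at this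
  have hsh : ∀ η, shiftConj (fun i => j (TwHeis.xGen χ (.ofAdd (Pi.single i 1))))
      (j (TwHeis.tGen χ 0)) η = j (TwHeis.tGen χ η) := by
    intro η
    rw [← map_shiftConj, shiftConj, TwHeis.monom_xGen, TwHeis.xGen_mul_tGen, add_zero]
  refine ⟨Q, hQ, fun i => j (TwHeis.xGen χ (.ofAdd (Pi.single i 1))), j (TwHeis.tGen χ 0),
    j (TwHeis.kGen χ), j (TwHeis.zPow χ 1), s, ?_, ?_, ?_, ?_, ?_, hsz, ?_⟩
  · rintro (⟨i, i'⟩ | - | ρ | ⟨ρ, i⟩ | ρ)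
    · simp only [encRel]
      rw [commutatorElement_eq_one_iff_commute]
      exact ((Commute.all _ _).map (TwHeis.xGen χ)).map j
    · simp only [encRel]
      rw [hsh, ← map_commutatorElement, TwHeis.commutator_kGen_tGen]
      have : χ xf = 0 := if_pos (.refl _)
      rw [this]
      exact map_one j
    · simp only [encRel]
      rw [hsh, hsh, mul_inv_eq_one]
      have := hs ρ (TwHeis.tGen _ 0)
      rwa [TwHeis.affineMap_tGen, TwHeis.affineMap_tGen] at this
    · simp only [encRel]
      rw [mul_inv_eq_one, ← map_zpow j, ← map_zpow j, ← map_zpow (TwHeis.xGen χ),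
        ← map_zpow (TwHeis.xGen χ), ← ofAdd_zsmul, ← ofAdd_zsmul]
      have := hs ρ (TwHeis.xGen _ (.ofAdd (Pi.single i 1)))
      rw [TwHeis.affineMap_xGen, TwHeis.affineMap_xGen] at this
      simp only [← Pi.single_smul, smul_eq_mul, mul_one]
      have e : ∀ p : ι → ℤ, AddMonoidHom.mulLeft p (Pi.single i 1) = Pi.single i (p i) := by
        intro p
        ext i'
        by_cases h : i' = i
        · subst h; simp
        · simp [h]
      rw [e, e] at this
      exact this
    · simp only [encRel]
      rw [commutatorElement_eq_one_iff_commute]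
      exact hsk ρ
  · rw [hsh, ← map_commutatorElement, TwHeis.commutator_kGen_tGen]
    have : χ ξ = 1 := if_neg hξ
    rw [this]
  · exact fun i => (TwHeis.zPow_commute _ _).map j
  · exact (TwHeis.zPow_commute _ _).map j
  · exact (TwHeis.zPow_commute _ _).map j
  · intro e he
    rw [← map_zpow, TwHeis.zPow_pow, mul_one] at he
    have := (injective_iff_map_eq_one j).1 hj _ he
    exact congrArg TwHeis.c this

/-- There are finitely many relators in a free group for which membership of the words
`⁅k, x ^ ν * t * x ^ (-ν)⁆` in their normal closure is undecidable; moreover a word of this form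
which is not a consequence of the relators is a central element of infinite order in some quotient
satisfying the relators. -/
theorem exists_word_family : ∃ (α κ : Type) (_ : Finite α) (_ : Finite κ) (rel : κ → FreeGroup α)
    (k t x : FreeGroup α) (S : Set ℕ), 3 ≤ Nat.card α ∧ (¬ ComputablePred fun ν => ν ∈ S) ∧
    (∀ ν ∈ S, ⁅k, x ^ ν * t * (x ^ ν)⁻¹⁆ ∈ Subgroup.normalClosure (Set.range rel)) ∧
    ∀ ν ∉ S, ∃ (Q : Type) (_ : Group Q) (π : FreeGroup α →* Q), (∀ r, π (rel r) = 1) ∧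
      (∀ f, Commute (π f) (π ⁅k, x ^ ν * t * (x ^ ν)⁻¹⁆)) ∧
      ∀ j : ℤ, π ⁅k, x ^ ν * t * (x ^ ν)⁻¹⁆ ^ j = 1 → j = 0 := by
  obtain ⟨ι, Ru, hι, hRu, hdec, rule, x₀, xf, i₀, hr, hund⟩ := exists_affine_undecidable
  have := Fintype.ofFinite ι
  let y : ι → FreeGroup (ι ⊕ Bool ⊕ Ru) := fun i => .of (.inl i)
  let t : FreeGroup (ι ⊕ Bool ⊕ Ru) := .of (.inr (.inl true))
  let k : FreeGroup (ι ⊕ Bool ⊕ Ru) := .of (.inr (.inl false))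
  let s : Ru → FreeGroup (ι ⊕ Bool ⊕ Ru) := fun ρ => .of (.inr (.inr ρ))
  refine ⟨ι ⊕ Bool ⊕ Ru, RelIndex ι Ru, inferInstance, inferInstance, encRel rule xf y t k s,
    k, shiftConj y t x₀, y i₀,
    {ν | Relation.EqvGen (AffineRel rule) (x₀ + Pi.single i₀ (ν : ℤ)) xf}, ?_, by simpa using hund, ?_, ?_⟩
  · have : Nonempty ι := ⟨i₀⟩
    rw [Nat.card_sum, Nat.card_sum, Nat.card_eq_fintype_card (α := Bool), Fintype.card_bool]
    have : 0 < Nat.card ι := Nat.card_pos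
    omega
  · intro ν hν
    let N := Subgroup.normalClosure (Set.range (encRel rule xf y t k s))
    let q := QuotientGroup.mk' N
    have h1 : ∀ i, encRel rule xf (fun i => q (y i)) (q t) (q k) (fun ρ => q (s ρ)) i = 1 := by
      intro i
      rw [← map_encRel]
      exact (QuotientGroup.eq_one_iff _).2 (Subgroup.subset_normalClosure ⟨i, rfl⟩)
    have hy : ∀ i j, Commute (q (y i)) (q (y j)) := fun i j =>
      commutatorElement_eq_one_iff_commute.1 (h1 (.inl (i, j)))
    have h2 := commute_of_eqvGen h1 hν
    rw [shiftConj_add hy, monom_single, ← map_shiftConj, zpow_natCast, ← map_pow, ← map_mul,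
      ← map_inv, ← map_mul, ← commutatorElement_eq_one_iff_commute, ← map_commutatorElement] at h2
    exact (QuotientGroup.eq_one_iff _).1 h2
  · intro ν hν
    obtain ⟨Q, hQ, y', t', k', z, s', h1, h2, h3, h4, h5, h6, h7⟩ :=
      exists_encRel_model rule xf hr _ hν
    let π : FreeGroup (ι ⊕ Bool ⊕ Ru) →* Q :=
      FreeGroup.lift (Sum.elim y' (Sum.elim (fun b => if b then t' else k') s'))
    have py : (fun i => π (y i)) = y' := by funext i; simp [π, y]
    have pt : π t = t' := by simp [π, t]
    have pk : π k = k' := by simp [π, k]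
    have ps : (fun i => π (s i)) = s' := by funext i; simp [π, s]
    have hy : ∀ i j, Commute (y' i) (y' j) := fun i j =>
      commutatorElement_eq_one_iff_commute.1 (h1 (.inl (i, j)))
    have hw : π ⁅k, y i₀ ^ ν * shiftConj y t x₀ * (y i₀ ^ ν)⁻¹⁆ = z := by
      rw [map_commutatorElement, map_mul, map_mul, map_inv, map_pow, map_shiftConj, py, pt, pk,
        ← h2, shiftConj_add hy, monom_single, zpow_natCast, ← congrFun py]
    refine ⟨Q, hQ, π, ?_, ?_, ?_⟩
    · intro r
      rw [map_encRel, py, pt, pk, ps, h1]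
    · intro f
      rw [hw]
      induction f using FreeGroup.induction_on with
      | C1 => rw [map_one]; exact Commute.one_left _
      | of a =>
        rcases a with i | (_ | _) | ρ
        · exact congrFun py i ▸ h3 i
        · exact pk ▸ h5
        · exact pt ▸ h4
        · exact congrFun ps ρ ▸ h6 ρ
      | inv_of a h => rw [map_inv]; exact h.inv_left
      | mul a b ha hb => rw [map_mul]; exact ha.mul_left hb
    · rw [hw]
      exact h7

end WordFamily

/-! ### Free groups: commutation with powers of generators, and a faithful linear representation -/

section FreeGroups

/-- In a free group of rank at least three, any nontrivial element `f` admits a generator no nonzero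
power of which commutes with `f` or conjugates `f` to an element commuting with `f`: take a generator
different from the first and last letters of the reduced word of `f`. -/
theorem FreeGroup.exists_gen_not_commute {α : Type} [Finite α] (hα : 3 ≤ Nat.card α)
    {f : FreeGroup α} (hf : f ≠ 1) : ∃ c : α, ∀ n : ℕ, 0 < n →
      ¬ Commute f (FreeGroup.of c ^ n) ∧
      ¬ Commute f (FreeGroup.of c ^ n * f * (FreeGroup.of c ^ n)⁻¹) := by
  classical
  have := Fintype.ofFinite α
  have hw : f.toWord ≠ [] := fun h => hf (FreeGroup.toWord_eq_nil_iff.1 h)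
  set L := f.toWord with hL
  have hred : FreeGroup.IsReduced L := FreeGroup.isReduced_toWord
  obtain ⟨c, hc⟩ : ∃ c : α, c ∉ ({(L.head hw).1, (L.getLast hw).1} : Finset α) := by
    by_contra! h
    have h1 : (Finset.univ : Finset α) ⊆ {(L.head hw).1, (L.getLast hw).1} := fun a _ => h a
    have h2 := Finset.card_le_card h1
    rw [Finset.card_univ, ← Nat.card_eq_fintype_card] at h2
    have h3 := Finset.card_le_two (a := (L.head hw).1) (b := (L.getLast hw).1)
    omega
  simp only [Finset.mem_insert, Finset.mem_singleton, not_or] at hc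
  refine ⟨c, fun n hn => ?_⟩
  have hf' : f = FreeGroup.mk L := FreeGroup.mk_toWord.symm
  have hpow : FreeGroup.of c ^ n = FreeGroup.mk (List.replicate n (c, true)) := by
    have : FreeGroup.of c ^ n = FreeGroup.mk [(c, true)] ^ n := rfl
    rw [this, FreeGroup.pow_mk]
    simp
  have hinv : (FreeGroup.of c ^ n)⁻¹ = FreeGroup.mk (List.replicate n (c, false)) := by
    rw [hpow, FreeGroup.inv_mk]
    simp [FreeGroup.invRev]
  have hP : ∀ b, FreeGroup.IsReduced (List.replicate n (c, b)) := fun b =>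
    List.isChain_replicate_of_rel n fun _ => rfl
  have hPL : ∀ b l, FreeGroup.IsReduced l → l.head? = L.head? →
      FreeGroup.IsReduced (List.replicate n (c, b) ++ l) := by
    intro b l hl hh
    refine List.isChain_append.2 ⟨hP b, hl, ?_⟩
    intro x hx y hy hxy
    rw [hh, List.head?_eq_some_head hw] at hy
    have h1 : x = (c, b) := List.eq_of_mem_replicate (List.mem_of_mem_getLast? hx)
    have h2 : L.head hw = y := by simpa using hy
    subst h1 h2
    exact absurd hxy hc.1
  have hLP : ∀ b l, FreeGroup.IsReduced l → (∀ y ∈ l.head?, y = (c, b)) →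
      FreeGroup.IsReduced (L ++ l) := by
    intro b l hl hh
    refine List.isChain_append.2 ⟨hred, hl, ?_⟩
    intro x hx y hy hxy
    rw [hh y hy] at hxy
    rw [List.getLast?_eq_some_getLast hw] at hx
    have h2 : L.getLast hw = x := by simpa using hx
    subst h2
    exact absurd hxy.symm hc.2
  have hrep : ∀ (b : Bool) l, ∀ y ∈ (List.replicate n (c, b) ++ l).head?, y = (c, b) := by
    intro b l y hy
    obtain ⟨m, rfl⟩ := Nat.exists_eq_succ_of_ne_zero hn.ne'
    simpa [List.replicate_succ, eq_comm] using hy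
  have hhead : ∀ l l', L ++ l ≠ List.replicate n (c, true) ++ l' := by
    intro l l' h
    have h1 := congrArg List.head? h
    rw [List.head?_append_of_ne_nil _ hw, List.head?_eq_some_head hw] at h1
    have h2 := hrep true l' _ h1.symm
    exact hc.1 (congrArg Prod.fst h2).symm
  have happ : ∀ l, (L ++ l).head? = L.head? := fun l => List.head?_append_of_ne_nil _ hw
  constructor
  · intro h
    rw [Commute, SemiconjBy, hpow, hf', FreeGroup.mul_mk, FreeGroup.mul_mk] at h
    have h := congrArg FreeGroup.toWord h
    rw [FreeGroup.toWord_mk, FreeGroup.toWord_mk, FreeGroup.IsReduced.reduce_eq,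
      FreeGroup.IsReduced.reduce_eq] at h
    · have := hhead (List.replicate n (c, true)) L h
      exact this
    · exact hPL _ _ hred rfl
    · exact hLP true _ (hP _) (by simpa using hrep true [])
  · intro h
    rw [Commute, SemiconjBy, hinv, hpow, hf', FreeGroup.mul_mk, FreeGroup.mul_mk, FreeGroup.mul_mk,
      FreeGroup.mul_mk] at h
    have h := congrArg FreeGroup.toWord h
    have r1 : FreeGroup.IsReduced (L ++ List.replicate n (c, false)) :=
      hLP false _ (hP _) (by simpa using hrep false [])
    have r2 : FreeGroup.IsReduced (List.replicate n (c, false) ++ L) := hPL _ _ hred rfl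
    have r3 : FreeGroup.IsReduced (L ++ (List.replicate n (c, false) ++ L)) :=
      hLP false _ r2 (hrep false L)
    rw [FreeGroup.toWord_mk, FreeGroup.toWord_mk, FreeGroup.IsReduced.reduce_eq,
      FreeGroup.IsReduced.reduce_eq] at h
    · simp only [List.append_assoc] at h
      exact hhead _ _ h
    · simp only [List.append_assoc]
      exact hPL _ _ r3 (happ _)
    · simp only [List.append_assoc]
      exact hLP true _ (hPL _ _ r1 (happ _)) (hrep true _)

/-- The matrix `1 + e * (5 * N)` where `N` has square zero and kernel spanned by `(i, 1)`. -/
def parabolic (i e : ℤ) : Matrix (Fin 2) (Fin 2) ℤ :=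
  !![1 - 5 * e * i, 5 * e * i ^ 2; -(5 * e), 1 + 5 * e * i]

theorem parabolic_mul (i e e' : ℤ) : parabolic i e * parabolic i e' = parabolic i (e + e') := by
  ext a b
  fin_cases a <;> fin_cases b <;> simp [parabolic, Matrix.mul_apply, Fin.sum_univ_two] <;> ring

theorem parabolic_zero (i : ℤ) : parabolic i 0 = 1 := by
  ext a b
  fin_cases a <;> fin_cases b <;> simp [parabolic]

/-- The one-parameter group of parabolic matrices fixing `(i, 1)`. -/
def parabolicHom (i : ℤ) : Multiplicative ℤ →* (Matrix (Fin 2) (Fin 2) ℤ)ˣ :=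
  MonoidHom.toHomUnits
    { toFun := fun e => parabolic i e.toAdd
      map_one' := parabolic_zero i
      map_mul' := fun _ _ => (parabolic_mul i _ _).symm }

theorem parabolicHom_apply (i : ℤ) (e : Multiplicative ℤ) :
    (parabolicHom i e : Matrix (Fin 2) (Fin 2) ℤ) = parabolic i e.toAdd := rfl

/-- The representation of a free group sending the generator `a` to a parabolic matrix fixing
`(l a, 1)`. -/
def freeRep {α : Type} (l : α → ℤ) : FreeGroup α →* (Matrix (Fin 2) (Fin 2) ℤ)ˣ :=
  FreeGroup.lift fun a => parabolicHom (l a) (.ofAdd 1)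

/-- Ping-pong on the sets of vectors `(p, q)` with `2 * |p - l a * q| < |q|`. -/
theorem freeRep_injective {α : Type} [Nontrivial α] {l : α → ℤ} (hl : Function.Injective l) :
    Function.Injective (freeRep l) := by
  let ev : (Matrix (Fin 2) (Fin 2) ℤ)ˣ →* Equiv.Perm (Fin 2 → ℤ) :=
    { toFun := fun M =>
        { toFun := fun v => M.1.mulVec v
          invFun := fun v => M⁻¹.1.mulVec v
          left_inv := fun v => by
            beta_reduce
            rw [Matrix.mulVec_mulVec, Units.inv_mul, Matrix.one_mulVec]
          right_inv := fun v => by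
            beta_reduce
            rw [Matrix.mulVec_mulVec, Units.mul_inv, Matrix.one_mulVec] }
      map_one' := by ext v; simp
      map_mul' := fun M M' => Equiv.ext fun v => (Matrix.mulVec_mulVec v M.1 M'.1).symm }
  have hev : ∀ i e v, ev (parabolicHom i e) v = (parabolic i e.toAdd).mulVec v := fun _ _ _ => rfl
  let f : ∀ _ : α, FreeGroup Unit →* Equiv.Perm (Fin 2 → ℤ) :=
    fun a => FreeGroup.lift fun _ => ev (parabolicHom (l a) (.ofAdd 1))
  let X : α → Set (Fin 2 → ℤ) := fun a => {v | 2 * |v 0 - l a * v 1| < |v 1|}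
  have key : Function.Injective (Monoid.CoprodI.lift f) := by
    apply Monoid.CoprodI.lift_injective_of_ping_pong f _ X
    · intro a
      refine ⟨![l a, 1], ?_⟩
      simp [X]
    · intro a b hab
      rw [Function.onFun, Set.disjoint_left]
      intro v hv hv'
      simp only [X, Set.mem_ofPred_eq] at hv hv'
      have h1 : 1 ≤ |l a - l b| := Int.one_le_abs (sub_ne_zero.2 (hl.ne hab))
      have h2 : |v 1| ≤ |(l a - l b) * v 1| := by
        rw [abs_mul]
        exact le_mul_of_one_le_left (abs_nonneg _) h1
      have h3 : (l a - l b) * v 1 = (v 0 - l b * v 1) - (v 0 - l a * v 1) := by ring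
      have h4 := abs_sub (v 0 - l b * v 1) (v 0 - l a * v 1)
      rw [← h3] at h4
      omega
    · intro a b hab
      refine FreeGroup.freeGroupUnitEquivInt.forall_congr_left.mpr ?_
      intro n hne
      have hn : n ≠ 0 := by
        rintro rfl
        apply hne
        simp [FreeGroup.freeGroupUnitEquivInt]
      rintro _ ⟨v, hv, rfl⟩
      have hfn : f a (FreeGroup.freeGroupUnitEquivInt.symm n) = ev (parabolicHom (l a) (.ofAdd n)) := by
        change FreeGroup.lift (fun _ => ev (parabolicHom (l a) (.ofAdd 1))) (FreeGroup.of () ^ n) = _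
        rw [map_zpow, FreeGroup.lift_apply_of, ← map_zpow, ← map_zpow, ← ofAdd_zsmul]
        simp
      simp only [X, Set.mem_ofPred_eq] at hv ⊢
      rw [hfn]
      change 2 * |ev _ v 0 - l a * ev _ v 1| < |ev _ v 1|
      rw [hev]
      simp only [parabolic, toAdd_ofAdd, Matrix.mulVec, dotProduct, Fin.sum_univ_two,
        Matrix.of_apply, Matrix.cons_val_zero, Matrix.cons_val_one]
      set d := v 0 - l a * v 1 with hd
      have e1 : (1 - 5 * n * l a) * v 0 + 5 * n * l a ^ 2 * v 1 -
          l a * (-(5 * n) * v 0 + (1 + 5 * n * l a) * v 1) = d := by rw [hd]; ring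
      have e2 : -(5 * n) * v 0 + (1 + 5 * n * l a) * v 1 = v 1 - 5 * n * d := by rw [hd]; ring
      rw [e1, e2]
      have h1 : 1 ≤ |l a - l b| := Int.one_le_abs (sub_ne_zero.2 (hl.ne hab.symm).symm)
      have h2 : |v 1| ≤ |(l a - l b) * v 1| := by
        rw [abs_mul]
        exact le_mul_of_one_le_left (abs_nonneg _) h1
      have h3 : (l a - l b) * v 1 = (v 0 - l b * v 1) - d := by rw [hd]; ring
      have h4 := abs_sub (v 0 - l b * v 1) d
      rw [← h3] at h4
      have h5 : |d| ≤ |n * d| := by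
        rw [abs_mul]
        exact le_mul_of_one_le_left (abs_nonneg _) (Int.one_le_abs hn)
      have h6 : |5 * n * d| = 5 * |n * d| := by rw [mul_assoc, abs_mul]; rfl
      have h8 := abs_nonneg d
      have h7 := abs_sub_abs_le_abs_sub (5 * n * d) (v 1)
      rw [abs_sub_comm] at h7
      omega
    · right
      obtain ⟨a⟩ : Nonempty α := inferInstance
      refine ⟨a, ?_⟩
      rw [FreeGroup.freeGroupUnitEquivInt.cardinal_eq, Cardinal.mk_denumerable]
      exact Cardinal.natCast_le_aleph0
  have hcomp : ∀ g, ev (freeRep l g) = Monoid.CoprodI.lift f (freeGroupEquivCoprodI g) := by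
    intro g
    have : ev.comp (freeRep l) =
        (Monoid.CoprodI.lift f).comp (freeGroupEquivCoprodI (ι := α)).toMonoidHom := by
      ext a
      simp [freeRep, f]
    exact DFunLike.congr_fun this g
  intro g g' h
  apply (freeGroupEquivCoprodI (ι := α)).injective
  apply key
  rw [← hcomp, ← hcomp, h]

end FreeGroups

/-! ### Fibre products and commensurable groups in the family -/

section Commensurability

variable {α κ : Type}

/-- The letters of the free group acting: a letter for each generator, one for each relator, and one
for the distinguished word. -/
abbrev ActLetter (α κ : Type) : Type := (α ⊕ κ) ⊕ Unit

/-- The free group on the generators and relators mapped to the fibre product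
of two copies of `FreeGroup α` over the finitely presented group. -/
def relHom (rel : κ → FreeGroup α) : FreeGroup (α ⊕ κ) →* (Fin 3 → FreeGroup α) :=
  FreeGroup.lift (Sum.elim (fun a => ![.of a, .of a, 1]) fun r => ![1, rel r, 1])

/-- The homomorphism by which the acting free group acts; the distinguished letter is sent to
`(1, w, a₀)`. -/
def actHom (rel : κ → FreeGroup α) (w : FreeGroup α) (a₀ : α) :
    FreeGroup (ActLetter α κ) →* (Fin 3 → FreeGroup α) :=
  FreeGroup.lift (Sum.elim (Sum.elim (fun a => ![.of a, .of a, 1]) fun r => ![1, rel r, 1])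
    fun _ => ![1, w, .of a₀])

theorem actHom_map_inl (rel : κ → FreeGroup α) (w : FreeGroup α) (a₀ : α)
    (W : FreeGroup (α ⊕ κ)) : actHom rel w a₀ (FreeGroup.map Sum.inl W) = relHom rel W := by
  have : (actHom rel w a₀).comp (FreeGroup.map Sum.inl) = relHom rel := by
    ext x i
    simp [actHom, relHom]
  exact DFunLike.congr_fun this W

/-- The image of `relHom` contains all consequences of the relators in the second coordinate. -/
theorem exists_relHom_eq {rel : κ → FreeGroup α} {g : FreeGroup α}
    (hg : g ∈ Subgroup.normalClosure (Set.range rel)) : ∃ W, relHom rel W = ![1, g, 1] := by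
  have hs : ∀ g : FreeGroup α, (![1, g, 1] : Fin 3 → FreeGroup α) = Pi.mulSingle 1 g := by
    intro g
    ext i
    fin_cases i <;> simp
  let T : Subgroup (FreeGroup α) :=
    (relHom rel).range.comap (MonoidHom.mulSingle (fun _ : Fin 3 => FreeGroup α) 1)
  have hT : ∀ g, g ∈ T ↔ ∃ W, relHom rel W = ![1, g, 1] := by
    intro g
    rw [hs]
    rfl
  have hmem : ∀ g f, f ∈ T → g * f * g⁻¹ ∈ T := by
    intro g f hf
    obtain ⟨W, hW⟩ := (hT f).1 hf
    refine (hT _).2 ⟨FreeGroup.map Sum.inl g * W * (FreeGroup.map Sum.inl g)⁻¹, ?_⟩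
    have : relHom rel (FreeGroup.map Sum.inl g) = ![g, g, 1] := by
      have h0 : ∀ i : Fin 3, i ≠ 2 → ((Pi.evalMonoidHom (fun _ : Fin 3 => FreeGroup α) i).comp
          (relHom rel)).comp (FreeGroup.map Sum.inl) = MonoidHom.id _ := by
        intro i hi
        ext a
        fin_cases i <;> first | exact absurd rfl hi | simp [relHom]
      have h2 : ((Pi.evalMonoidHom (fun _ : Fin 3 => FreeGroup α) 2).comp
          (relHom rel)).comp (FreeGroup.map Sum.inl) = 1 := by
        ext a
        simp [relHom]
      ext i
      fin_cases i
      · exact DFunLike.congr_fun (h0 0 (by decide)) g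
      · exact DFunLike.congr_fun (h0 1 (by decide)) g
      · exact DFunLike.congr_fun h2 g
    rw [map_mul, map_mul, map_inv, this, hW]
    ext i
    fin_cases i <;> simp
  have hn : T.Normal := ⟨fun f hf g => hmem g f hf⟩
  refine (hT g).1 (Subgroup.normalClosure_le_normal ?_ hg)
  rintro _ ⟨r, rfl⟩
  exact (hT _).2 ⟨.of (.inr r), by simp [relHom]⟩

/-- The endomorphism multiplying the distinguished letter by a word in the other ones. -/
def transvect (W : FreeGroup (α ⊕ κ)) :
    FreeGroup (ActLetter α κ) →* FreeGroup (ActLetter α κ) :=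
  FreeGroup.lift (Sum.elim (fun x => .of (.inl x)) fun u => .of (.inr u) * FreeGroup.map Sum.inl W)

theorem transvect_map_inl (W W' : FreeGroup (α ⊕ κ)) :
    transvect W (FreeGroup.map Sum.inl W') = FreeGroup.map Sum.inl W' := by
  have : (transvect W).comp (FreeGroup.map Sum.inl) = FreeGroup.map Sum.inl := by
    ext x
    simp [transvect]
  exact DFunLike.congr_fun this W'

theorem transvect_comp (W W' : FreeGroup (α ⊕ κ)) (h : W * W' = 1) :
    (transvect W).comp (transvect W') = MonoidHom.id (FreeGroup (ActLetter α κ)) := by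
  ext x
  rcases x with x | x
  · simp [transvect]
  · rw [MonoidHom.comp_apply, MonoidHom.id_apply]
    have : transvect W' (.of (.inr x)) = .of (.inr x) * FreeGroup.map Sum.inl W' := by
      simp [transvect]
    rw [this, map_mul, transvect_map_inl]
    simp only [transvect, FreeGroup.lift_apply_of, Sum.elim_inr]
    rw [mul_assoc, ← map_mul, h, map_one, mul_one]

/-- Up to an automorphism of the acting free group, the action depends only on the class of the
distinguished word modulo the relators. -/
theorem exists_actHom_comp_eq {rel : κ → FreeGroup α} {w w' : FreeGroup α} (a₀ : α)
    (h : w⁻¹ * w' ∈ Subgroup.normalClosure (Set.range rel)) :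
    ∃ e : FreeGroup (ActLetter α κ) ≃* FreeGroup (ActLetter α κ),
      ∀ y, actHom rel w a₀ (e y) = actHom rel w' a₀ y := by
  obtain ⟨W, hW⟩ := exists_relHom_eq h
  refine ⟨MonoidHom.toMulEquiv (transvect W) (transvect W⁻¹)
    (transvect_comp _ _ (inv_mul_cancel W)) (transvect_comp _ _ (mul_inv_cancel W)), fun y => ?_⟩
  have : (actHom rel w a₀).comp (transvect W) = actHom rel w' a₀ := by
    refine FreeGroup.ext_hom _ _ fun x => ?_
    rcases x with x | x
    · simp [actHom, transvect]
    · rw [MonoidHom.comp_apply]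
      simp only [transvect, FreeGroup.lift_apply_of, Sum.elim_inr]
      rw [map_mul, actHom_map_inl, hW]
      simp only [actHom, FreeGroup.lift_apply_of, Sum.elim_inr]
      ext i
      fin_cases i <;> simp
  exact DFunLike.congr_fun this y

variable {N : Type} [CommGroup N]

/-- The semidirect product of `N` by a free group acting through `actHom`. -/
abbrev FibreSemi (act : (Fin 3 → FreeGroup α) →* MulAut N) (rel : κ → FreeGroup α)
    (w : FreeGroup α) (a₀ : α) : Type :=
  N ⋊[act.comp (actHom rel w a₀)] FreeGroup (ActLetter α κ)

/-- Finite direct factors are invisible to commensurability. -/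
theorem commensurable_prod {X Y Z Z' : Type} [Group X] [Group Y] [Group Z] [Group Z'] [Finite Z]
    [Finite Z'] (e : X ≃* Y) : GroupCommensurable (X × Z) (Y × Z') := by
  have hidx : ∀ (X Z : Type) [Group X] [Group Z] [Finite Z],
      (MonoidHom.inl X Z).range.index ≠ 0 := by
    intro X Z _ _ _
    have : (MonoidHom.inl X Z).range = (MonoidHom.snd X Z).ker := by
      ext ⟨x, z⟩
      rw [MonoidHom.mem_ker, MonoidHom.mem_range]
      exact ⟨fun ⟨_, h⟩ => (congrArg Prod.snd h).symm, fun h => ⟨x, Prod.ext rfl h.symm⟩⟩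
    rw [this, Subgroup.index_ker]
    exact Nat.card_pos.ne'
  have hinj : ∀ (X Z : Type) [Group X] [Group Z], Function.Injective (MonoidHom.inl X Z) :=
    fun X Z _ _ x y h => congrArg Prod.fst h
  exact ⟨(MonoidHom.inl X Z).range, (MonoidHom.inl Y Z').range, hidx X Z, hidx Y Z',
    ⟨((MonoidHom.ofInjective (hinj X Z)).symm.trans e).trans (MonoidHom.ofInjective (hinj Y Z'))⟩⟩

theorem fibreSemi_commensurable {act : (Fin 3 → FreeGroup α) →* MulAut N} {rel : κ → FreeGroup α}
    {w w' : FreeGroup α} (a₀ : α) (h : w ∈ Subgroup.normalClosure (Set.range rel))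
    (h' : w' ∈ Subgroup.normalClosure (Set.range rel)) (Z Z' : Type) [Group Z] [Group Z'] [Finite Z]
    [Finite Z'] : GroupCommensurable (FibreSemi act rel w a₀ × Z) (FibreSemi act rel w' a₀ × Z') := by
  obtain ⟨e, he⟩ := exists_actHom_comp_eq a₀ (mul_mem (inv_mem h') h)
  refine commensurable_prod (SemidirectProduct.congr (MulEquiv.refl N) e fun y => ?_)
  rw [MonoidHom.comp_apply, MonoidHom.comp_apply, he]
  rfl

end Commensurability

/-! ### Groups in the family which are not commensurable -/

section NotCommensurable

open scoped commutatorElement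

variable {α κ N Z : Type} [CommGroup N] [CommGroup Z] {act : (Fin 3 → FreeGroup α) →* MulAut N}
  {rel : κ → FreeGroup α} {w : FreeGroup α} {a₀ : α}

/-- The projection to the free group. -/
def projFree : FibreSemi act rel w a₀ × Z →* FreeGroup (ActLetter α κ) :=
  SemidirectProduct.rightHom.comp (MonoidHom.fst _ _)

/-- The splitting of the projection to the free group. -/
def sectFree : FreeGroup (ActLetter α κ) →* FibreSemi act rel w a₀ × Z :=
  (MonoidHom.inl _ _).comp SemidirectProduct.inr

theorem projFree_sectFree (y : FreeGroup (ActLetter α κ)) :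
    projFree (sectFree y : FibreSemi act rel w a₀ × Z) = y := rfl

/-- The kernel of the projection is the abelian group `N × Z`, so commuting with one of its elements
means fixing its component in `N`. -/
theorem commute_iff_of_projFree_eq_one {g x : FibreSemi act rel w a₀ × Z} (hx : projFree x = 1) :
    Commute g x ↔ act (actHom rel w a₀ (projFree g)) x.1.left = x.1.left := by
  obtain ⟨⟨n, y⟩, z⟩ := x
  obtain ⟨⟨m, v⟩, z'⟩ := g
  obtain rfl : y = 1 := hx
  rw [Commute, SemiconjBy, Prod.ext_iff, SemidirectProduct.ext_iff]
  simp only [Prod.fst_mul, Prod.snd_mul, SemidirectProduct.mul_left, SemidirectProduct.mul_right,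
    map_one, MulAut.one_apply, one_mul, mul_one, mul_comm z', and_true]
  rw [mul_comm n m, mul_right_inj]
  rfl

/-- The kernel of the projection to the free group, described by commutation with elements of a given
subgroup of finite index. -/
theorem projFree_eq_one_iff [Finite α] (hα : 3 ≤ Nat.card α) [Finite κ]
    {K : Subgroup (FibreSemi act rel w a₀ × Z)} (hK : K.index ≠ 0)
    {h : FibreSemi act rel w a₀ × Z} :
    projFree h = 1 ↔ ∀ g ∈ K, Commute h (g * h * g⁻¹) := by
  constructor
  · intro hh g _
    rw [commute_iff_of_projFree_eq_one (by simp [hh]), hh]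
    simp
  · intro hh
    by_contra hne
    have h3 : 3 ≤ Nat.card (ActLetter α κ) := by
      rw [Nat.card_sum, Nat.card_sum]
      omega
    obtain ⟨c, hc⟩ := FreeGroup.exists_gen_not_commute h3 hne
    obtain ⟨n, hn, -, hmem⟩ := K.exists_pow_mem_of_index_ne_zero hK (sectFree (.of c))
    refine (hc n hn).2 ?_
    have := (hh _ hmem).map projFree
    simpa only [map_mul, map_inv, map_pow, projFree_sectFree] using this

/-- The elements acting trivially on `N` are the ones centralizing the elements of `K` in the kernel of
the projection to the free group. -/
theorem actHom_eq_one_iff [IsMulTorsionFree N] (hact : Function.Injective act)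
    {K : Subgroup (FibreSemi act rel w a₀ × Z)} (hK : K.index ≠ 0)
    {g : FibreSemi act rel w a₀ × Z} :
    actHom rel w a₀ (projFree g) = 1 ↔ ∀ x ∈ K, projFree x = 1 → Commute g x := by
  constructor
  · intro hg x _ hx
    rw [commute_iff_of_projFree_eq_one hx, hg, map_one, MulAut.one_apply]
  · intro hg
    refine (injective_iff_map_eq_one act).1 hact _ (MulEquiv.ext fun n => ?_)
    obtain ⟨k, hk, -, hmem⟩ := K.exists_pow_mem_of_index_ne_zero hK
      (MonoidHom.inl _ Z (SemidirectProduct.inl n))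
    rw [← map_pow, ← map_pow] at hmem
    have h1 := hg _ hmem rfl
    rw [commute_iff_of_projFree_eq_one rfl] at h1
    change act _ (n ^ k) = n ^ k at h1
    rw [map_pow] at h1
    exact pow_left_injective hk.ne' h1

/-- An isomorphism of finite index subgroups preserves the subgroups acting trivially on `N`. -/
theorem actHom_eq_one_iff_of_equiv [Finite α] (hα : 3 ≤ Nat.card α) [Finite κ] [IsMulTorsionFree N]
    (hact : Function.Injective act) {Z' : Type} [CommGroup Z'] {w' : FreeGroup α}
    {K : Subgroup (FibreSemi act rel w a₀ × Z)} (hK : K.index ≠ 0)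
    {K' : Subgroup (FibreSemi act rel w' a₀ × Z')} (hK' : K'.index ≠ 0) (θ : K ≃* K') (g : K) :
    actHom rel w a₀ (projFree g.1) = 1 ↔ actHom rel w' a₀ (projFree (θ g).1) = 1 := by
  have hcomm : ∀ x y : K, Commute (x : FibreSemi act rel w a₀ × Z) y ↔
      Commute (θ x : FibreSemi act rel w' a₀ × Z') (θ y) := by
    intro x y
    have h1 : ∀ {G : Type} [Group G] {K : Subgroup G} (x y : K), Commute (x : G) y ↔ Commute x y :=
      fun x y => by simp only [Commute, SemiconjBy, Subtype.ext_iff, Subgroup.coe_mul]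
    rw [h1, h1]
    exact ⟨fun h => h.map θ, fun h => by simpa using h.map θ.symm⟩
  have hker : ∀ x : K, projFree x.1 = 1 ↔ projFree (θ x).1 = 1 := by
    intro x
    rw [projFree_eq_one_iff hα hK, projFree_eq_one_iff hα hK']
    constructor
    · intro h y hy
      obtain ⟨y', hy'⟩ := θ.surjective ⟨y, hy⟩
      have := (hcomm x (y' * x * y'⁻¹)).1 (h y' y'.2)
      rw [map_mul, map_mul, map_inv, hy'] at this
      exact this
    · intro h y hy
      refine (hcomm x (⟨y, hy⟩ * x * ⟨y, hy⟩⁻¹)).2 ?_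
      rw [map_mul, map_mul, map_inv]
      exact h _ (θ ⟨y, hy⟩).2
  rw [actHom_eq_one_iff hact hK, actHom_eq_one_iff hact hK']
  constructor
  · intro h y hy hy1
    obtain ⟨y', hy'⟩ := θ.surjective ⟨y, hy⟩
    have h1 := (hker y').2 (by rw [hy']; exact hy1)
    have := (hcomm g y').1 (h y' y'.2 h1)
    rwa [hy'] at this
  · intro h y hy hy1
    exact (hcomm g ⟨y, hy⟩).2 (h _ (θ ⟨y, hy⟩).2 ((hker ⟨y, hy⟩).1 hy1))

/-- If `w'` is a consequence of the relators, the image of the action for `w'` contains `(1, 1, a₀)`,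
whose powers are central. In the image for `w`, a central element of a subgroup of finite index has
the form `(1, 1, a₀ ^ j)`, and then `w ^ j` is trivial in `Q`, so `j = 0`. -/
theorem fibreSemi_not_commensurable [Finite α] (hα : 3 ≤ Nat.card α) [Finite κ]
    [IsMulTorsionFree N] (hact : Function.Injective act) (a₀ : α) (Z Z' : Type) [CommGroup Z]
    [CommGroup Z'] {w w' : FreeGroup α} (hw' : w' ∈ Subgroup.normalClosure (Set.range rel))
    {Q : Type} [Group Q] (π : FreeGroup α →* Q) (hrel : ∀ r, π (rel r) = 1)
    (hcen : ∀ f, Commute (π f) (π w)) (hord : ∀ j : ℤ, π w ^ j = 1 → j = 0) :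
    ¬ GroupCommensurable (FibreSemi act rel w a₀ × Z) (FibreSemi act rel w' a₀ × Z') := by
  rintro ⟨K, K', hK, hK', ⟨θ⟩⟩
  -- an element acting only on the last coordinate
  obtain ⟨W, hW⟩ := exists_relHom_eq hw'
  let u : FreeGroup (ActLetter α κ) := .of (.inr ()) * (FreeGroup.map Sum.inl W)⁻¹
  have hu : actHom rel w' a₀ u = ![1, 1, .of a₀] := by
    rw [map_mul, map_inv, actHom_map_inl, hW]
    simp only [actHom, FreeGroup.lift_apply_of, Sum.elim_inr]
    ext i
    fin_cases i <;> simp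
  obtain ⟨n, hn, -, hmem⟩ := K'.exists_pow_mem_of_index_ne_zero hK' (sectFree u)
  obtain ⟨h, hh⟩ := θ.surjective ⟨_, hmem⟩
  have hθh : actHom rel w' a₀ (projFree (θ h).1) = ![1, 1, .of a₀] ^ n := by
    have e : projFree (sectFree u ^ n : FibreSemi act rel w' a₀ × Z') = u ^ n := by
      rw [map_pow, projFree_sectFree]
    rw [hh]
    change actHom rel w' a₀ (projFree (sectFree u ^ n)) = _
    rw [e, map_pow, hu]
  -- the third coordinate counts the occurrences of `w''` separating the first two coordinates
  have hinv : ∀ y : FreeGroup (ActLetter α κ), ∀ w'' : FreeGroup α,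
      ∃ j : ℤ, actHom rel w'' a₀ y 2 = .of a₀ ^ j ∧ ∀ π : FreeGroup α →* Q, (∀ r, π (rel r) = 1) →
        (∀ f, Commute (π f) (π w'')) →
        π (actHom rel w'' a₀ y 1) = π (actHom rel w'' a₀ y 0) * π w'' ^ j := by
    intro y w''
    induction y using FreeGroup.induction_on with
    | C1 => exact ⟨0, by simp⟩
    | of x =>
      rcases x with (a | r) | b
      · exact ⟨0, by simp [actHom]⟩
      · exact ⟨0, by simp +contextual [actHom]⟩
      · exact ⟨1, by simp [actHom]⟩
    | inv_of x ih =>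
      obtain ⟨j, h1, h2⟩ := ih
      refine ⟨-j, by rw [map_inv, Pi.inv_apply, h1, zpow_neg], fun π hr hc => ?_⟩
      rw [map_inv, Pi.inv_apply, Pi.inv_apply, map_inv, map_inv, h2 π hr hc, mul_inv_rev, zpow_neg,
        ← map_inv π (_ : FreeGroup α)]
      exact ((hc _).zpow_right j).inv_right.eq.symm
    | mul y y' ih ih' =>
      obtain ⟨j, h1, h2⟩ := ih
      obtain ⟨j', h1', h2'⟩ := ih'
      refine ⟨j + j', by rw [map_mul, Pi.mul_apply, h1, h1', zpow_add], fun π hr hc => ?_⟩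
      rw [map_mul, Pi.mul_apply, Pi.mul_apply, map_mul, map_mul, h2 π hr hc, h2' π hr hc, zpow_add,
        mul_assoc, mul_assoc, ← mul_assoc (π w'' ^ j), ((hc _).zpow_right j).symm.eq, mul_assoc]
  -- the action of `h` commutes with that of all elements of `K`
  have hcomm : ∀ g : K, Commute (actHom rel w a₀ (projFree h.1)) (actHom rel w a₀ (projFree g.1)) := by
    intro g
    rw [← commutatorElement_eq_one_iff_commute, ← map_commutatorElement, ← map_commutatorElement]
    refine (actHom_eq_one_iff_of_equiv hα hact hK hK' θ ⁅h, g⁆).2 ?_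
    rw [map_commutatorElement]
    change actHom rel w' a₀ (projFree ⁅(θ h).1, (θ g).1⁆) = 1
    rw [map_commutatorElement, map_commutatorElement, commutatorElement_eq_one_iff_commute, hθh]
    obtain ⟨j, hj, -⟩ := hinv (projFree (θ g).1) w'
    refine funext fun i => ?_
    fin_cases i
    · simp
    · simp
    · simp only [Fin.reduceFinMk, Pi.mul_apply, Pi.pow_apply, hj, Matrix.cons_val]
      exact ((Commute.refl _).pow_left n).zpow_right j
  have hfst : ∀ i : Fin 3, i ≠ 2 → actHom rel w a₀ (projFree h.1) i = 1 := by
    intro i hi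
    by_contra hne
    obtain ⟨c, hc⟩ := FreeGroup.exists_gen_not_commute hα hne
    obtain ⟨m, hm, -, hmem⟩ := K.exists_pow_mem_of_index_ne_zero hK (sectFree (.of (.inl (.inl c))))
    refine (hc m hm).1 ?_
    have := congrFun (hcomm ⟨_, hmem⟩).eq i
    have e : actHom rel w a₀ (projFree ((sectFree (.of (.inl (.inl c))) :
        FibreSemi act rel w a₀ × Z) ^ m)) i = .of c ^ m := by
      rw [map_pow, map_pow, projFree_sectFree]
      fin_cases i <;> first | exact absurd rfl hi | simp [actHom]
    simp only [Pi.mul_apply, e] at this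
    exact this
  have htriv : actHom rel w a₀ (projFree h.1) = 1 := by
    obtain ⟨j, h1, h2⟩ := hinv (projFree h.1) w
    have h3 := h2 π hrel hcen
    rw [hfst 0 (by decide), hfst 1 (by decide), map_one, one_mul] at h3
    rw [hord j h3.symm, zpow_zero] at h1
    refine funext fun i => ?_
    fin_cases i
    · exact hfst 0 (by decide)
    · exact hfst 1 (by decide)
    · exact h1
  rw [actHom_eq_one_iff_of_equiv hα hact hK hK' θ h, hθh] at htriv
  have h4 := congrFun htriv 2
  have h5 : (FreeGroup.of a₀) ^ n = 1 := h4
  exact FreeGroup.of_ne_one a₀ ((pow_eq_one_iff_left hn.ne').1 h5)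

end NotCommensurable

/-! ### Presentations of semidirect products of free abelian groups by free groups -/

section Presentation

variable {Γ H L σ : Type} [Group Γ] [Group H] [Fintype σ] [DecidableEq σ]

/-- The action on `ℤ^σ` of a group represented by integer matrices. -/
def matAct (B : Γ →* Matrix σ σ ℤ) : Γ →* MulAut (Multiplicative (σ → ℤ)) where
  toFun g :=
    { toFun := fun v => .ofAdd (Matrix.mulVec (B g) v.toAdd)
      invFun := fun v => .ofAdd (Matrix.mulVec (B g⁻¹) v.toAdd)
      left_inv := fun v => by
        simp [Matrix.mulVec_mulVec, ← map_mul]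
      right_inv := fun v => by
        simp [Matrix.mulVec_mulVec, ← map_mul]
      map_mul' := fun v w => by
        simp [Matrix.mulVec_add] }
  map_one' := by
    ext v
    simp
  map_mul' g h := by
    ext v
    simp [Matrix.mulVec_mulVec]

@[simp] theorem matAct_apply (B : Γ →* Matrix σ σ ℤ) (g : Γ) (v : Multiplicative (σ → ℤ)) :
    matAct B g v = .ofAdd (Matrix.mulVec (B g) v.toAdd) := rfl

theorem matAct_injective (B : Γ →* Matrix σ σ ℤ) (hB : Function.Injective B) :
    Function.Injective (matAct B) := by
  intro g h hgh
  apply hB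
  apply Matrix.mulVec_injective
  funext v
  exact congrArg Multiplicative.toAdd (DFunLike.congr_fun hgh (Multiplicative.ofAdd v))

/-- The defining relations of `(ℤ^σ ⋊ F) × ℤ/(m+1)`, with `F` free on the letters `y l`, which act
by the matrices `A l`. -/
structure SemiRels (m : ℕ) (A : L → Matrix σ σ ℤ) (y : L → H) (e : σ → H) (c : H) : Prop where
  comm : ∀ s t, Commute (e s) (e t)
  act : ∀ l s, y l * e s * (y l)⁻¹ = monom e (fun t => A l t s)
  cy : ∀ l, Commute c (y l)
  ce : ∀ s, Commute c (e s)
  cpow : c ^ (m + 1) = 1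

theorem monom_zero (y : σ → H) : monom y (0 : σ → ℤ) = 1 := by
  simp [monom]

/-- `monom e` as a homomorphism, when the `e s` commute. -/
noncomputable def monomHom (e : σ → H) (he : ∀ s t, Commute (e s) (e t)) :
    Multiplicative (σ → ℤ) →* H where
  toFun v := monom e v.toAdd
  map_one' := monom_zero e
  map_mul' _ _ := monom_add he _ _

theorem monom_mulVec {e : σ → H} (he : ∀ s t, Commute (e s) (e t)) (g : H) (M : Matrix σ σ ℤ)
    (h : ∀ s, g * e s * g⁻¹ = monom e (fun t => M t s)) (v : σ → ℤ) :
    monom e (M.mulVec v) = g * monom e v * g⁻¹ := by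
  have h1 : g * monom e v * g⁻¹ = monom (fun s => monom e (fun t => M t s)) v := by
    have := map_monom (MulAut.conj g).toMonoidHom e v
    simp only [MulEquiv.coe_toMonoidHom, MulAut.conj_apply, h] at this
    exact this
  have h2 : M.mulVec v =
      (monom (fun s => Multiplicative.ofAdd (fun t => M t s)) v).toAdd := by
    rw [show monom (fun s => Multiplicative.ofAdd (fun t => M t s)) v = ∏ s, Multiplicative.ofAdd (fun t => M t s) ^ v s from
      Finset.prod_map_toList _ _]
    ext t
    simp [Matrix.mulVec, dotProduct, toAdd_prod, mul_comm]
  rw [h1, h2]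
  exact map_monom (monomHom e he) _ v

theorem lift_conj_monom {e : σ → H} (he : ∀ s t, Commute (e s) (e t)) {y : L → H}
    {B : FreeGroup L →* Matrix σ σ ℤ}
    (h : ∀ l s, y l * e s * (y l)⁻¹ = monom e (fun t => B (.of l) t s)) (g : FreeGroup L) :
    ∀ v : σ → ℤ, monom e ((B g).mulVec v) = FreeGroup.lift y g * monom e v *
      (FreeGroup.lift y g)⁻¹ := by
  induction g using FreeGroup.induction_on with
  | C1 => simp
  | of l => intro v; simpa using monom_mulVec he _ _ (h l) v
  | inv_of l ih =>
    intro v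
    have := ih ((B (.of l)⁻¹).mulVec v)
    rw [Matrix.mulVec_mulVec, ← map_mul, mul_inv_cancel, map_one, Matrix.one_mulVec] at this
    rw [this]
    simp only [map_inv]
    group
  | mul a b iha ihb =>
    intro v
    rw [map_mul, ← Matrix.mulVec_mulVec, iha, ihb, map_mul]
    group

/-- The group `(ℤ^σ ⋊ F) × ℤ/(m+1)`. -/
abbrev SemiGroup (m : ℕ) (B : FreeGroup L →* Matrix σ σ ℤ) : Type :=
  (Multiplicative (σ → ℤ) ⋊[matAct B] FreeGroup L) × Multiplicative (ZMod (m + 1))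

/-- The standard generators of `SemiGroup m B` coming from the free group. -/
def genY (m : ℕ) (B : FreeGroup L →* Matrix σ σ ℤ) (l : L) : SemiGroup m B :=
  (SemidirectProduct.inr (.of l), 1)

/-- The standard generators of `SemiGroup m B` coming from the free abelian group. -/
def genE (m : ℕ) (B : FreeGroup L →* Matrix σ σ ℤ) (s : σ) : SemiGroup m B :=
  (SemidirectProduct.inl (.ofAdd (Pi.single s 1)), 1)

/-- The standard generator of the finite factor of `SemiGroup m B`. -/
def genC (m : ℕ) (B : FreeGroup L →* Matrix σ σ ℤ) : SemiGroup m B :=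
  (1, .ofAdd 1)

theorem monom_ofAdd_single (v : σ → ℤ) :
    monom (fun s => Multiplicative.ofAdd (Pi.single s (1 : ℤ) : σ → ℤ)) v = .ofAdd v := by
  rw [show monom (fun s => Multiplicative.ofAdd (Pi.single s (1 : ℤ) : σ → ℤ)) v =
    ∏ s, Multiplicative.ofAdd (Pi.single s (1 : ℤ) : σ → ℤ) ^ v s from Finset.prod_map_toList _ _]
  apply Multiplicative.toAdd.injective
  ext t
  simp [toAdd_prod, Pi.single_apply]

theorem monom_genE (m : ℕ) (B : FreeGroup L →* Matrix σ σ ℤ) (v : σ → ℤ) :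
    monom (genE m B) v = (SemidirectProduct.inl (.ofAdd v), 1) := by
  rw [← monom_ofAdd_single v]
  let f : Multiplicative (σ → ℤ) →* SemiGroup m B :=
    (MonoidHom.inl (Multiplicative (σ → ℤ) ⋊[matAct B] FreeGroup L)
      (Multiplicative (ZMod (m + 1)))).comp SemidirectProduct.inl
  exact (map_monom f _ v).symm

theorem semiRels_gen (m : ℕ) (B : FreeGroup L →* Matrix σ σ ℤ) :
    SemiRels m (fun l => B (.of l)) (genY m B) (genE m B) (genC m B) where
  comm s t := by
    refine Prod.ext ?_ (by simp [genE])
    simp only [genE, Prod.fst_mul, ← map_mul, mul_comm]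
  act l s := by
    rw [monom_genE]
    refine Prod.ext ?_ (by simp [genE, genY])
    simp only [genE, genY, Prod.fst_mul, Prod.fst_inv, ← map_inv]
    rw [← SemidirectProduct.inl_aut]
    simp [Matrix.mulVec_single, Matrix.col]
    rfl
  cy l := Prod.ext (by simp [genC, genY]) (by simp [genC, genY])
  ce s := Prod.ext (by simp [genC, genE]) (by simp [genC, genE])
  cpow := by
    refine Prod.ext (by simp [genC]) ?_
    apply Multiplicative.toAdd.injective
    simp only [genC, Prod.pow_snd, toAdd_pow, toAdd_ofAdd]
    simp only [nsmul_one, ZMod.natCast_self, Prod.snd_one, toAdd_one]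

/-- A group satisfying `SemiRels`, generated by the elements in question, which maps onto
`SemiGroup m B` compatibly with the generators, is isomorphic to it. -/
theorem SemiRels.bijective {m : ℕ} {B : FreeGroup L →* Matrix σ σ ℤ} {y : L → H} {e : σ → H}
    {c : H} (h : SemiRels m (fun l => B (.of l)) y e c)
    (hgen : ∀ K : Subgroup H, (∀ l, y l ∈ K) → (∀ s, e s ∈ K) → c ∈ K → K = ⊤)
    (Φ : H →* SemiGroup m B) (hy : ∀ l, Φ (y l) = genY m B l) (he : ∀ s, Φ (e s) = genE m B s)
    (hc : Φ c = genC m B) : Function.Bijective Φ := by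
  have hcz : ∀ x, Commute c x := by
    intro x
    have := hgen (Subgroup.centralizer {c}) (fun l => ?_) (fun s => ?_) ?_
    · have hx : x ∈ Subgroup.centralizer {c} := this ▸ Subgroup.mem_top x
      exact (Subgroup.mem_centralizer_iff.1 hx c rfl)
    · exact Subgroup.mem_centralizer_iff.2 (by rintro _ rfl; exact h.cy l)
    · exact Subgroup.mem_centralizer_iff.2 (by rintro _ rfl; exact h.ce s)
    · exact Subgroup.mem_centralizer_iff.2 (by rintro _ rfl; rfl)
  let ψ₁ : Multiplicative (σ → ℤ) ⋊[matAct B] FreeGroup L →* H :=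
    SemidirectProduct.lift (monomHom e h.comm) (FreeGroup.lift y) (by
      intro g
      ext v
      exact lift_conj_monom h.comm h.act g _)
  let ψ₂ : Multiplicative (ZMod (m + 1)) →* H := AddMonoidHom.toMultiplicativeLeft
    (ZMod.lift (m + 1) ⟨zmultiplesHom (Additive H) (.ofMul c), by
      have := h.cpow
      simp only [zmultiplesHom_apply, natCast_zsmul, ← ofMul_pow, this, ofMul_one]⟩)
  have hψ₂ : ψ₂ (.ofAdd 1) = c := by
    have : ZMod.lift (m + 1) ⟨zmultiplesHom (Additive H) (.ofMul c), by
      have := h.cpow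
      simp only [zmultiplesHom_apply, natCast_zsmul, ← ofMul_pow, this, ofMul_one]⟩
        (((1 : ℤ) : ZMod (m + 1))) = Additive.ofMul c := by
      rw [ZMod.lift_coe]; simp
    simp only [Int.cast_one] at this
    exact congrArg Additive.toMul this
  have hψ₂z : ∀ z x, Commute (ψ₂ z) x := by
    intro z x
    obtain ⟨k, hk⟩ := ZMod.intCast_surjective z.toAdd
    have : z = (Multiplicative.ofAdd 1) ^ k := by
      apply Multiplicative.toAdd.injective
      simp [← hk]
    rw [this, map_zpow, hψ₂]
    exact (hcz x).zpow_left k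
  let Ψ : SemiGroup m B →* H := ψ₁.noncommCoprod ψ₂ fun a z => (hψ₂z z _).symm
  have hΨy : ∀ l, Ψ (genY m B l) = y l := by
    intro l
    simp [Ψ, ψ₁, genY, MonoidHom.noncommCoprod_apply]
  have hΨe : ∀ s, Ψ (genE m B s) = e s := by
    intro s
    simp [Ψ, ψ₁, genE, MonoidHom.noncommCoprod_apply, monomHom, monom_single]
  have hΨc : Ψ (genC m B) = c := by
    simp [Ψ, ψ₁, genC, MonoidHom.noncommCoprod_apply, hψ₂]
  refine ⟨Function.LeftInverse.injective (g := Ψ) ?_,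
    Function.RightInverse.surjective (g := Ψ) ?_⟩
  · intro x
    have := hgen ((Ψ.comp Φ).eqLocus (MonoidHom.id H)) (fun l => ?_) (fun s => ?_) ?_
    · have hx : x ∈ (Ψ.comp Φ).eqLocus (MonoidHom.id H) := this ▸ Subgroup.mem_top x
      exact hx
    · exact (congrArg Ψ (hy l)).trans (hΨy l)
    · exact (congrArg Ψ (he s)).trans (hΨe s)
    · exact (congrArg Ψ hc).trans hΨc
  · have h1 : ∀ g, Φ (FreeGroup.lift y g) = (SemidirectProduct.inr g, 1) := by
      intro g
      have : Φ.comp (FreeGroup.lift y) = (MonoidHom.inl _ _).comp SemidirectProduct.inr := by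
        ext l : 1
        exact (congrArg Φ FreeGroup.lift_apply_of).trans (hy l)
      exact DFunLike.congr_fun this g
    have h2 : ∀ v, Φ (monom e v) = (SemidirectProduct.inl (.ofAdd v), 1) := by
      intro v
      rw [map_monom, ← monom_genE, funext he]
    rintro ⟨a, z⟩
    obtain ⟨k, hk⟩ := ZMod.intCast_surjective z.toAdd
    have hz : z = (Multiplicative.ofAdd 1) ^ k := by
      apply Multiplicative.toAdd.injective
      simp [← hk]
    have ha : Φ (ψ₁ a) = (a, 1) := by
      change Φ (monom e a.left.toAdd * FreeGroup.lift y a.right) = _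
      rw [map_mul, h1, h2]
      exact Prod.ext (SemidirectProduct.inl_left_mul_inr_right a) (by simp)
    change Φ (ψ₁ a * ψ₂ z) = _
    rw [map_mul, ha, hz, map_zpow, map_zpow, hψ₂, hc]
    refine Prod.ext ?_ ?_ <;> simp [genC]

end Presentation

/-! ### Coded words and relators -/

section Codes

variable {H K L σ : Type} [Group H] [Group K]

/-- The value of a coded word under an assignment of group elements to the letters. -/
def wval (x : ℕ → H) (w : List (ℕ × Bool)) : H :=
  (w.map fun p => if p.2 then x p.1 else (x p.1)⁻¹).prod

@[simp] theorem wval_nil (x : ℕ → H) : wval x [] = 1 := rfl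

@[simp] theorem wval_cons (x : ℕ → H) (p : ℕ × Bool) (w : List (ℕ × Bool)) :
    wval x (p :: w) = (if p.2 then x p.1 else (x p.1)⁻¹) * wval x w := by
  simp [wval]

@[simp] theorem wval_append (x : ℕ → H) (v w : List (ℕ × Bool)) :
    wval x (v ++ w) = wval x v * wval x w := by
  simp [wval]

@[simp] theorem wval_replicate (x : ℕ → H) (k : ℕ) (p : ℕ × Bool) :
    wval x (List.replicate k p) = (if p.2 then x p.1 else (x p.1)⁻¹) ^ k := by
  simp [wval]

theorem map_wval (φ : H →* K) (x : ℕ → H) (w : List (ℕ × Bool)) :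
    φ (wval x w) = wval (fun j => φ (x j)) w := by
  induction w with
  | nil => simp
  | cons p w ih => rw [wval_cons, wval_cons, map_mul, ih]; split <;> simp

theorem wordToFree_eq_wval {n : ℕ} (hn : 0 < n) (w : List (ℕ × Bool)) :
    wordToFree n w = wval (fun j => FreeGroup.of (⟨j % n, Nat.mod_lt _ hn⟩ : Fin n)) w := by
  simp [wordToFree, wval, hn]

/-- A coded word for the commutator of two letters. -/
def commWord (i j : ℕ) : List (ℕ × Bool) := [(i, true), (j, true), (i, false), (j, false)]

/-- A coded word for an integer power of a letter. -/
def zpowWord (j : ℕ) (z : ℤ) : List (ℕ × Bool) :=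
  List.replicate z.toNat (j, true) ++ List.replicate (-z).toNat (j, false)

theorem wval_commWord_eq_one (x : ℕ → H) (i j : ℕ) :
    wval x (commWord i j) = 1 ↔ Commute (x i) (x j) := by
  rw [← commutatorElement_eq_one_iff_commute]
  simp [commWord, commutatorElement_def, mul_assoc]

theorem wval_zpowWord (x : ℕ → H) (j : ℕ) (z : ℤ) : wval x (zpowWord j z) = x j ^ z := by
  obtain ⟨k, rfl | rfl⟩ := z.eq_nat_or_neg <;> simp [zpowWord]

variable [Fintype L] [Fintype σ] [DecidableEq σ] {n : ℕ}

/-- A coded word for `monom e ξ`, where `e s` is the letter `j s`. -/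
noncomputable def monomWord (j : σ → ℕ) (ξ : σ → ℤ) : List (ℕ × Bool) :=
  Finset.univ.toList.flatMap fun s => zpowWord (j s) (ξ s)

theorem wval_monomWord (x : ℕ → H) (j : σ → ℕ) (ξ : σ → ℤ) :
    wval x (monomWord j ξ) = monom (fun s => x (j s)) ξ := by
  unfold monomWord monom
  induction (Finset.univ : Finset σ).toList with
  | nil => rfl
  | cons s l ih => simp [wval_zpowWord, ih]

/-- The coded relators of the group `(ℤ^σ ⋊ F) × ℤ/(m+1)`, for a numbering `q` of
the generators. -/
noncomputable def semiWords (q : (L ⊕ σ) ⊕ Unit → ℕ) (m : ℕ) (A : L → Matrix σ σ ℤ) :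
    List (List (ℕ × Bool)) :=
  ((Finset.univ.toList : List (σ × σ)).map fun p =>
      commWord (q (.inl (.inr p.1))) (q (.inl (.inr p.2)))) ++
  ((Finset.univ.toList : List (L × σ)).map fun p =>
      [(q (.inl (.inl p.1)), true), (q (.inl (.inr p.2)), true), (q (.inl (.inl p.1)), false)] ++
        monomWord (fun s => q (.inl (.inr s))) fun t => - A p.1 t p.2) ++
  ((Finset.univ.toList : List (L ⊕ σ)).map fun g => commWord (q (.inr ())) (q (.inl g))) ++
  [List.replicate (m + 1) (q (.inr ()), true)]

theorem semiWords_iff (q : (L ⊕ σ) ⊕ Unit → ℕ) (m : ℕ) (A : L → Matrix σ σ ℤ) (x : ℕ → H) :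
    (∀ w ∈ semiWords q m A, wval x w = 1) ↔
      SemiRels m A (fun l => x (q (.inl (.inl l)))) (fun s => x (q (.inl (.inr s))))
        (x (q (.inr ()))) := by
  have hneg : ∀ (e : σ → H) (he : ∀ s t, Commute (e s) (e t)) (ξ : σ → ℤ),
      monom e (-ξ) = (monom e ξ)⁻¹ := by
    intro e he ξ
    rw [eq_inv_iff_mul_eq_one, ← monom_add he, neg_add_cancel, monom_zero]
  have hact : ∀ (e : σ → H) (he : ∀ s t, Commute (e s) (e t)) (l : L) (s : σ) (y : H),
      y * (e s * (y⁻¹ * monom e fun t => - A l t s)) = 1 ↔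
        y * e s * y⁻¹ = monom e fun t => A l t s := by
    intro e he l s y
    rw [show (fun t => - A l t s) = - fun t => A l t s from rfl, hneg e he, ← mul_assoc,
      ← mul_assoc, mul_inv_eq_one]
  simp only [semiWords, List.forall_mem_append, List.forall_mem_map, Finset.mem_toList,
    Finset.mem_univ, forall_const, List.mem_singleton, Prod.forall, forall_eq, wval_commWord_eq_one, wval_append, wval_cons,
    wval_nil, wval_monomWord, wval_replicate, mul_one, if_true, Sum.forall, mul_assoc,
    Bool.false_eq_true, if_false]
  constructor
  · rintro ⟨⟨⟨h1, h2⟩, h3, h4⟩, h5⟩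
    exact ⟨h1, fun l s => (hact _ h1 l s _).1 (h2 l s), h3, h4, h5⟩
  · rintro ⟨h1, h2, h3, h4, h5⟩
    exact ⟨⟨⟨h1, fun l s => (hact _ h1 l s _).2 (h2 l s)⟩, h3, h4⟩, h5⟩

/-- All standard generators of `SemiGroup m B`. -/
def semiGen (m : ℕ) (B : FreeGroup L →* Matrix σ σ ℤ) : (L ⊕ σ) ⊕ Unit → SemiGroup m B :=
  Sum.elim (Sum.elim (genY m B) (genE m B)) fun _ => genC m B

/-- The code given by `semiWords` presents `SemiGroup m B`. -/
theorem exists_codeGroup_equiv (q : (L ⊕ σ) ⊕ Unit ≃ Fin n) (hn : 0 < n) (m : ℕ)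
    (B : FreeGroup L →* Matrix σ σ ℤ) :
    ∃ Φ : codeGroup (n, semiWords (fun g => (q g : ℕ)) m fun l => B (.of l)) ≃* SemiGroup m B,
      ∀ w, Φ (PresentedGroup.mk _ (wordToFree n w)) =
        wval (fun j => semiGen m B (q.symm ⟨j % n, Nat.mod_lt _ hn⟩)) w := by
  set ws := semiWords (fun g => (q g : ℕ)) m fun l => B (.of l) with hws
  have hmod : ∀ g, (⟨(q g : ℕ) % n, Nat.mod_lt _ hn⟩ : Fin n) = q g := fun g =>
    Fin.ext (Nat.mod_eq_of_lt (q g).2)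
  have key : ∀ {H : Type} [Group H] (φ : FreeGroup (Fin n) →* H) (w),
      φ (wordToFree n w) = wval (fun j => φ (.of ⟨j % n, Nat.mod_lt _ hn⟩)) w := by
    intro H _ φ w
    rw [wordToFree_eq_wval hn, map_wval]
  have hrel : ∀ w ∈ ws, wval (fun j => semiGen m B (q.symm ⟨j % n, Nat.mod_lt _ hn⟩)) w = 1 := by
    rw [hws, semiWords_iff]
    simp only [hmod, Equiv.symm_apply_apply]
    exact semiRels_gen m B
  have hlift : ∀ r ∈ codeRels (n, ws), FreeGroup.lift (fun i => semiGen m B (q.symm i)) r = 1 := by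
    rintro _ ⟨w, hw, rfl⟩
    rw [key]
    simpa using hrel w hw
  let Φ : codeGroup (n, ws) →* SemiGroup m B := PresentedGroup.toGroup hlift
  have hH : ∀ w ∈ ws, wval (fun j => (PresentedGroup.of ⟨j % n, Nat.mod_lt _ hn⟩ :
      codeGroup (n, ws))) w = 1 := by
    intro w hw
    have h1 : PresentedGroup.mk (codeRels (n, ws)) (wordToFree n w) = 1 := by
      apply (QuotientGroup.eq_one_iff _).2
      exact Subgroup.subset_normalClosure ⟨w, hw, rfl⟩
    rw [key] at h1
    exact h1
  rw [hws, semiWords_iff, ← hws] at hH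
  simp only [hmod] at hH
  have hbij := hH.bijective ?_ Φ (fun l => ?_) (fun s => ?_) ?_
  · refine ⟨MulEquiv.ofBijective Φ hbij, fun w => ?_⟩
    have := key (Φ.comp (PresentedGroup.mk (codeRels (n, ws)))) w
    refine this.trans ?_
    congr 1
    funext j
    exact PresentedGroup.toGroup.of hlift
  · intro K h1 h2 h3
    rw [eq_top_iff, ← PresentedGroup.closure_range_of, Subgroup.closure_le]
    rintro _ ⟨i, rfl⟩
    obtain ⟨g, rfl⟩ := q.surjective i
    rcases g with (l | s) | ⟨⟩
    · exact h1 l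
    · exact h2 s
    · exact h3
  all_goals
    refine (PresentedGroup.toGroup.of hlift).trans ?_
    simp [semiGen]

end Codes

/-! ### The groups in the family -/

section ConcreteGroup

variable {L σ : Type} [Fintype σ] [DecidableEq σ]

/-- The torsion elements are those of the finite factor, as `ℤ^σ ⋊ F` is torsion free. -/
theorem SemiGroup.isOfFinOrder_iff {m : ℕ} {B : FreeGroup L →* Matrix σ σ ℤ}
    (g : SemiGroup m B) : IsOfFinOrder g ↔ g.1 = 1 := by
  constructor
  · intro hg
    have h1 : IsOfFinOrder g.1 := (MonoidHom.fst _ _).isOfFinOrder hg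
    have h2 : g.1.right = 1 := by
      have : IsOfFinOrder (SemidirectProduct.rightHom g.1) :=
        SemidirectProduct.rightHom.isOfFinOrder h1
      exact this.eq_one'
    have h3 : g.1 = SemidirectProduct.inl g.1.left := by
      ext <;> simp [h2]
    have h4 : IsOfFinOrder g.1.left := by
      rw [h3] at h1
      exact (SemidirectProduct.inl_injective.isOfFinOrder_iff).1 h1
    rw [h3, h4.eq_one', map_one]
  · intro hg
    obtain ⟨k, hk, hz⟩ := isOfFinOrder_iff_pow_eq_one.1 (isOfFinOrder_of_finite g.2)
    exact isOfFinOrder_iff_pow_eq_one.2 ⟨k, hk, Prod.ext (by rw [Prod.pow_fst, hg]; simp) hz⟩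

theorem SemiGroup.card_torsion (m : ℕ) (B : FreeGroup L →* Matrix σ σ ℤ) :
    Nat.card {g : SemiGroup m B // IsOfFinOrder g} = m + 1 := by
  have : {g : SemiGroup m B // IsOfFinOrder g} ≃ Multiplicative (ZMod (m + 1)) :=
    { toFun := fun g => g.1.2
      invFun := fun z => ⟨(1, z), (SemiGroup.isOfFinOrder_iff _).2 rfl⟩
      left_inv := fun g => Subtype.ext
        (Prod.ext ((SemiGroup.isOfFinOrder_iff _).1 g.2).symm rfl)
      right_inv := fun z => rfl }
  rw [Nat.card_congr this]
  simp

/-- The order of the finite factor is an isomorphism invariant. -/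
theorem SemiGroup.eq_of_equiv {m m' : ℕ} {B B' : FreeGroup L →* Matrix σ σ ℤ}
    (e : SemiGroup m B ≃* SemiGroup m' B') : m = m' := by
  have h := Nat.card_congr (Equiv.subtypeEquiv (p := fun g => IsOfFinOrder g)
    (q := fun g => IsOfFinOrder g) e.toEquiv fun g =>
      (e.injective.isOfFinOrder_iff (f := e.toMonoidHom)).symm)
  rw [SemiGroup.card_torsion, SemiGroup.card_torsion] at h
  omega

theorem GroupCommensurable.congr {G G' H H' : Type} [Group G] [Group G'] [Group H] [Group H']
    (e : G ≃* G') (f : H ≃* H') (h : GroupCommensurable G H) : GroupCommensurable G' H' := by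
  obtain ⟨K₁, K₂, h₁, h₂, ⟨φ⟩⟩ := h
  refine ⟨K₁.map e.toMonoidHom, K₂.map f.toMonoidHom, ?_, ?_,
    ⟨(e.subgroupMap K₁).symm.trans (φ.trans (f.subgroupMap K₂))⟩⟩
  · exact (Subgroup.index_map_equiv K₁ e).symm ▸ h₁
  · exact (Subgroup.index_map_equiv K₂ f).symm ▸ h₂

theorem matAct_comp {Γ Δ : Type} [Group Γ] [Group Δ] (B : Δ →* Matrix σ σ ℤ) (f : Γ →* Δ) :
    matAct (B.comp f) = (matAct B).comp f := by
  ext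
  rfl

/-- The block diagonal representation of the cube of a free group on `(ℤ²)³`. -/
def diagRep {α : Type} (l : α → ℤ) :
    (Fin 3 → FreeGroup α) →* Matrix (Fin 2 × Fin 3) (Fin 2 × Fin 3) ℤ where
  toFun γ := Matrix.blockDiagonal fun i => (freeRep l (γ i)).1
  map_one' := by
    simp only [Pi.one_apply, map_one]
    exact Matrix.blockDiagonal_one
  map_mul' γ δ := by
    simp only [Pi.mul_apply, map_mul]
    exact Matrix.blockDiagonal_mul _ _

theorem diagRep_injective {α : Type} [Nontrivial α] {l : α → ℤ} (hl : Function.Injective l) :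
    Function.Injective (diagRep l) := by
  intro γ δ h
  funext i
  apply freeRep_injective hl
  apply Units.ext
  have hblock : Matrix.blockDiagonal (fun i => (freeRep l (γ i)).1) =
      Matrix.blockDiagonal (fun i => (freeRep l (δ i)).1) := h
  exact congrFun (Matrix.blockDiagonal_injective hblock) i

/-- The representation by which the acting free group acts on `ℤ⁶`. -/
def actRep {α κ : Type} (l : α → ℤ) (rel : κ → FreeGroup α) (w : FreeGroup α) (a₀ : α) :
    FreeGroup (ActLetter α κ) →* Matrix (Fin 2 × Fin 3) (Fin 2 × Fin 3) ℤ :=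
  (diagRep l).comp (actHom rel w a₀)

section

variable {α κ : Type} {l : α → ℤ} {rel : κ → FreeGroup α}
  {w w' : FreeGroup α} (a₀ : α) (m m' : ℕ)

theorem actRep_commensurable
    (h : w ∈ Subgroup.normalClosure (Set.range rel))
    (h' : w' ∈ Subgroup.normalClosure (Set.range rel)) :
    GroupCommensurable (SemiGroup m (actRep l rel w a₀)) (SemiGroup m' (actRep l rel w' a₀)) := by
  unfold SemiGroup actRep
  rw [matAct_comp, matAct_comp]
  exact fibreSemi_commensurable a₀ h h' _ _

theorem actRep_not_commensurable [Finite α] [Finite κ] (hα : 3 ≤ Nat.card α) (hl : Function.Injective l)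
    {Q : Type} [Group Q]
    (h' : w' ∈ Subgroup.normalClosure (Set.range rel)) (π : FreeGroup α →* Q)
    (hrel : ∀ r, π (rel r) = 1) (hcen : ∀ f, Commute (π f) (π w))
    (hord : ∀ j : ℤ, π w ^ j = 1 → j = 0) :
    ¬ GroupCommensurable (SemiGroup m (actRep l rel w a₀))
      (SemiGroup m' (actRep l rel w' a₀)) := by
  have : Nontrivial α := Finite.one_lt_card_iff_nontrivial.1 (by omega)
  unfold SemiGroup actRep
  rw [matAct_comp, matAct_comp]
  exact fibreSemi_not_commensurable hα (matAct_injective _ (diagRep_injective hl)) a₀ _ _ h' π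
    hrel hcen hord

end

end ConcreteGroup

/-! ### Primitive recursive integer matrices -/

section PrimrecInt

variable {β γ ι : Type} [Primcodable β] [Primcodable γ]

/-- An integer-valued function is primitive recursive if it is a difference of
two primitive recursive functions with values in `ℕ`. -/
def PrimrecInt (f : β → ℤ) : Prop :=
  ∃ p q : β → ℕ, Primrec p ∧ Primrec q ∧ ∀ b, f b = p b - q b

namespace PrimrecInt

variable {f g : β → ℤ}

theorem natCast {p : β → ℕ} (hp : Primrec p) : PrimrecInt fun b => (p b : ℤ) :=
  ⟨p, fun _ => 0, hp, Primrec.const 0, fun b => by simp⟩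

theorem const (z : ℤ) : PrimrecInt fun _ : β => z :=
  ⟨fun _ => z.toNat, fun _ => (-z).toNat, Primrec.const _, Primrec.const _, fun b => by dsimp only; omega⟩

theorem comp (hf : PrimrecInt f) {h : γ → β} (hh : Primrec h) : PrimrecInt fun c => f (h c) := by
  obtain ⟨p, q, hp, hq, h⟩ := hf
  exact ⟨_, _, hp.comp hh, hq.comp hh, fun b => h _⟩

theorem add (hf : PrimrecInt f) (hg : PrimrecInt g) : PrimrecInt fun b => f b + g b := by
  obtain ⟨p, q, hp, hq, h⟩ := hf
  obtain ⟨p', q', hp', hq', h'⟩ := hg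
  exact ⟨_, _, Primrec.nat_add.comp hp hp', Primrec.nat_add.comp hq hq', fun b => by
    dsimp only; rw [h, h']; push_cast; ring⟩

theorem neg (hf : PrimrecInt f) : PrimrecInt fun b => - f b := by
  obtain ⟨p, q, hp, hq, h⟩ := hf
  exact ⟨q, p, hq, hp, fun b => by dsimp only; rw [h]; ring⟩

theorem mul (hf : PrimrecInt f) (hg : PrimrecInt g) : PrimrecInt fun b => f b * g b := by
  obtain ⟨p, q, hp, hq, h⟩ := hf
  obtain ⟨p', q', hp', hq', h'⟩ := hg
  exact ⟨_, _, Primrec.nat_add.comp (Primrec.nat_mul.comp hp hp') (Primrec.nat_mul.comp hq hq'),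
    Primrec.nat_add.comp (Primrec.nat_mul.comp hp hq') (Primrec.nat_mul.comp hq hp'), fun b => by
    dsimp only; rw [h, h']; push_cast; ring⟩

theorem ite {c : β → Prop} [DecidablePred c] (hc : PrimrecPred c) (hf : PrimrecInt f)
    (hg : PrimrecInt g) : PrimrecInt fun b => if c b then f b else g b := by
  obtain ⟨p, q, hp, hq, h⟩ := hf
  obtain ⟨p', q', hp', hq', h'⟩ := hg
  exact ⟨_, _, Primrec.ite hc hp hp', Primrec.ite hc hq hq', fun b => by
    dsimp only; split <;> simp only [h, h']⟩

theorem sum {s : Finset ι} {F : ι → β → ℤ} (hF : ∀ i ∈ s, PrimrecInt (F i)) :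
    PrimrecInt fun b => ∑ i ∈ s, F i b := by
  classical
  induction s using Finset.induction_on with
  | empty => simpa using const 0
  | insert i s hi ih =>
    simp only [Finset.sum_insert hi]
    exact (hF i (by simp)).add (ih fun j hj => hF j (by simp [hj]))

theorem eq_const (hf : PrimrecInt f) (z : ℤ) : PrimrecPred fun b => f b = z := by
  obtain ⟨p, q, hp, hq, h⟩ := hf.add (const (-z))
  refine (Primrec.eq.comp hp hq).of_eq fun b => ?_
  have := h b
  dsimp only at this ⊢
  omega

theorem toNat (hf : PrimrecInt f) : Primrec fun b => (f b).toNat := by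
  obtain ⟨p, q, hp, hq, h⟩ := hf
  refine (Primrec.nat_sub.comp hp hq).of_eq fun b => ?_
  rw [h]
  omega

theorem dvd (hf : PrimrecInt f) {m : β → ℕ} (hm : Primrec m) :
    PrimrecPred fun b => (m b : ℤ) ∣ f b := by
  obtain ⟨p, q, hp, hq, h⟩ := hf
  refine (Primrec.eq.comp (Primrec.nat_mod.comp hp hm) (Primrec.nat_mod.comp hq hm)).of_eq
    fun b => ?_
  rw [h, ← dvd_neg, neg_sub]
  exact Nat.modEq_iff_dvd

theorem list_sum {f : γ → ℤ} (hf : PrimrecInt f) :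
    PrimrecInt fun l : List γ => (l.map f).sum := by
  obtain ⟨p, q, hp, hq, h⟩ := hf
  have key : ∀ r : γ → ℕ, Primrec r → Primrec fun l : List γ => l.foldr (fun c s => r c + s) 0 := by
    intro r hr
    exact Primrec.list_foldr (h := fun _ x => r x.1 + x.2) Primrec.id (Primrec.const 0)
      (Primrec.nat_add.comp (hr.comp (Primrec.fst.comp Primrec.snd))
        (Primrec.snd.comp Primrec.snd)).to₂
  refine ⟨_, _, key p hp, key q hq, fun l => ?_⟩
  induction l with
  | nil => simp
  | cons c l ih =>
    simp only [List.map_cons, List.sum_cons, List.foldr_cons, ih, h]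
    push_cast
    ring

end PrimrecInt

theorem Primrec.fin_pi {k : ℕ} {f : Fin k → β → γ} (h : ∀ j, Primrec (f j)) :
    Primrec fun b j => f j b :=
  Primrec.fin_curry.2 ((Primrec.fin_curry₁.2 h).comp Primrec.snd Primrec.fst).to₂

/-- A matrix-valued function is primitive recursive if its entries are. -/
def PrimrecMat (M : β → Matrix ι ι ℤ) : Prop := ∀ s t, PrimrecInt fun b => M b s t

namespace PrimrecMat

theorem const (M : Matrix ι ι ℤ) : PrimrecMat fun _ : β => M := fun _ _ => PrimrecInt.const _

theorem comp {M : β → Matrix ι ι ℤ} (hM : PrimrecMat M) {h : γ → β} (hh : Primrec h) :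
    PrimrecMat fun c => M (h c) := fun s t => (hM s t).comp hh

variable [Fintype ι]

theorem mul {M N : β → Matrix ι ι ℤ} (hM : PrimrecMat M) (hN : PrimrecMat N) :
    PrimrecMat fun b => M b * N b := by
  intro s t
  simp only [Matrix.mul_apply]
  exact PrimrecInt.sum fun i _ => (hM s i).mul (hN i t)

variable [DecidableEq ι]

theorem list_prod {D : β × γ → Matrix ι ι ℤ} (hD : PrimrecMat D) :
    PrimrecMat fun x : β × List γ => (x.2.map fun c => D (x.1, c)).prod := by
  intro s₀ t₀
  choose P Q hP hQ h using hD
  let k := Fintype.card ι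
  let e : ι ≃ Fin k := Fintype.equivFin ι
  let S := (Fin k → ℕ) × (Fin k → ℕ)
  let init : S := (fun j => if e.symm j = t₀ then 1 else 0, fun _ => 0)
  let step : β × List γ → γ × S → S := fun x y =>
    (fun j => ∑ t, (P (e.symm j) t (x.1, y.1) * y.2.1 (e t) +
        Q (e.symm j) t (x.1, y.1) * y.2.2 (e t)),
      fun j => ∑ t, (P (e.symm j) t (x.1, y.1) * y.2.2 (e t) +
        Q (e.symm j) t (x.1, y.1) * y.2.1 (e t)))
  have hsum : ∀ {δ : Type} [Primcodable δ] (F : ι → δ → ℕ), (∀ i, Primrec (F i)) →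
      Primrec fun d => ∑ i, F i d := by
    intro δ _ F hF
    have hF' : ∀ s : Finset ι, Primrec fun d => ∑ i ∈ s, F i d := by
      intro s
      induction s using Finset.induction_on with
      | empty => simpa using Primrec.const 0
      | insert i s hi ih =>
        simp only [Finset.sum_insert hi]
        exact Primrec.nat_add.comp (hF i) ih
    exact hF' _
  have hstep : Primrec₂ step := by
    have hbc : Primrec fun z : (β × List γ) × (γ × S) => (z.1.1, z.2.1) :=
      (Primrec.fst.comp Primrec.fst).pair (Primrec.fst.comp Primrec.snd)
    have hu : ∀ t, Primrec fun z : (β × List γ) × (γ × S) => z.2.2.1 (e t) := fun t =>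
      Primrec.fin_app.comp (Primrec.fst.comp (Primrec.snd.comp Primrec.snd)) (Primrec.const (e t))
    have hv : ∀ t, Primrec fun z : (β × List γ) × (γ × S) => z.2.2.2 (e t) := fun t =>
      Primrec.fin_app.comp (Primrec.snd.comp (Primrec.snd.comp Primrec.snd)) (Primrec.const (e t))
    refine Primrec.pair (Primrec.fin_pi fun j => hsum _ fun t => ?_)
      (Primrec.fin_pi fun j => hsum _ fun t => ?_)
    · exact Primrec.nat_add.comp (Primrec.nat_mul.comp ((hP _ t).comp hbc) (hu t))
        (Primrec.nat_mul.comp ((hQ _ t).comp hbc) (hv t))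
    · exact Primrec.nat_add.comp (Primrec.nat_mul.comp ((hP _ t).comp hbc) (hv t))
        (Primrec.nat_mul.comp ((hQ _ t).comp hbc) (hu t))
  have hfold : Primrec fun x : β × List γ =>
      x.2.foldr (fun c s => step x (c, s)) init :=
    Primrec.list_foldr Primrec.snd (Primrec.const init) hstep
  refine ⟨_, _, Primrec.fin_app.comp (Primrec.fst.comp hfold) (Primrec.const (e s₀)),
    Primrec.fin_app.comp (Primrec.snd.comp hfold) (Primrec.const (e s₀)), ?_⟩
  rintro ⟨b, l⟩
  have key : ∀ (l' l : List γ) (s : ι), (l.map fun c => D (b, c)).prod s t₀ =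
      ((l.foldr (fun c s => step (b, l') (c, s)) init).1 (e s) : ℤ) -
        (l.foldr (fun c s => step (b, l') (c, s)) init).2 (e s) := by
    intro l' l
    induction l with
    | nil => intro s; simp [init, Matrix.one_apply]
    | cons c l ih =>
      intro s
      simp only [List.map_cons, List.prod_cons, Matrix.mul_apply, List.foldr_cons, ih, h]
      simp only [step, Equiv.symm_apply_apply]
      push_cast
      rw [← Finset.sum_sub_distrib]
      exact Finset.sum_congr rfl fun t _ => by ring
  exact key l l s₀

end PrimrecMat

end PrimrecInt

/-! ### Uniform solution of the word problem -/

section WordProblem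

variable {L σ ι : Type} [Fintype σ] [DecidableEq σ] {n : ℕ}

/-- The affine representation of `ℤ^σ ⋊ F` on `ℤ^σ ⊕ ℤ`. -/
def affRep {Γ : Type} [Group Γ] (B : Γ →* Matrix σ σ ℤ) :
    Multiplicative (σ → ℤ) ⋊[matAct B] Γ →* Matrix (σ ⊕ Unit) (σ ⊕ Unit) ℤ where
  toFun a := Matrix.fromBlocks (B a.right) (Matrix.of fun s _ => a.left.toAdd s) 0 1
  map_one' := by
    rw [← Matrix.fromBlocks_one]
    congr 1
    simp
  map_mul' a b := by
    rw [Matrix.fromBlocks_multiply]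
    congr 1
    · simp
    · ext s t
      simp [Matrix.mul_apply, Matrix.mulVec, dotProduct, add_comm]
    · simp
    · simp

/-- Homomorphisms into integer matrices with primitive recursive values on the generators
have primitive recursive values on words. -/
theorem primrecMat_wval [Fintype ι] [DecidableEq ι] (hn : 0 < n) {G : ℕ → Type} [∀ i, Group (G i)]
    (x : ∀ i, Fin n → G i) (ρ : ∀ i, G i →* Matrix ι ι ℤ)
    (h : ∀ k, PrimrecMat fun i => ρ i (x i k)) (h' : ∀ k, PrimrecMat fun i => ρ i (x i k)⁻¹) :
    PrimrecMat fun p : ℕ × List (ℕ × Bool) =>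
      ρ p.1 (wval (fun j => x p.1 ⟨j % n, Nat.mod_lt _ hn⟩) p.2) := by
  let D : ℕ × (ℕ × Bool) → Matrix ι ι ℤ := fun p =>
    ∑ k : Fin n, if p.2.1 % n = k then
      (if p.2.2 = true then ρ p.1 (x p.1 k) else ρ p.1 (x p.1 k)⁻¹) else 0
  have hD : PrimrecMat D := by
    intro s t
    simp only [D, Matrix.sum_apply, apply_ite (fun M : Matrix ι ι ℤ => M s t), Matrix.zero_apply]
    refine PrimrecInt.sum fun k _ => PrimrecInt.ite ?_ (PrimrecInt.ite ?_ ?_ ?_)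
      (PrimrecInt.const 0)
    · exact Primrec.eq.comp (Primrec.nat_mod.comp (Primrec.fst.comp Primrec.snd)
        (Primrec.const n)) (Primrec.const _)
    · exact Primrec.eq.comp (Primrec.snd.comp Primrec.snd) (Primrec.const true)
    · exact (h k s t).comp Primrec.fst
    · exact (h' k s t).comp Primrec.fst
  intro s t
  convert hD.list_prod s t using 2 with p
  obtain ⟨i, w⟩ := p
  simp only [wval, map_list_prod, List.map_map]
  refine congrArg (fun l : List (Matrix ι ι ℤ) => l.prod s t) (List.map_congr_left ?_)
  rintro ⟨j, b⟩ -
  have : ∀ k : Fin n, (j % n = (k : ℕ)) ↔ k = ⟨j % n, Nat.mod_lt _ hn⟩ := fun k =>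
    ⟨fun h => Fin.ext h.symm, fun h => by rw [h]⟩
  cases b <;> simp [D, this]

theorem affRep_eq_one {Γ : Type} [Group Γ] {B : Γ →* Matrix σ σ ℤ}
    {a : Multiplicative (σ → ℤ) ⋊[matAct B] Γ} (h : affRep B a = 1) : a.left = 1 := by
  apply Multiplicative.toAdd.injective
  funext s
  have := congrFun (congrFun h (.inl s)) (.inr ())
  simpa [affRep] using this

theorem affRep_inl {Γ : Type} [Group Γ] (B : Γ →* Matrix σ σ ℤ) (v : Multiplicative (σ → ℤ)) :
    affRep B (SemidirectProduct.inl v) =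
      Matrix.fromBlocks 1 (Matrix.of fun s _ => v.toAdd s) 0 1 := by
  simp [affRep]

theorem affRep_inr {Γ : Type} [Group Γ] (B : Γ →* Matrix σ σ ℤ) (g : Γ) :
    affRep B (SemidirectProduct.inr g) = Matrix.fromBlocks (B g) 0 0 1 := by
  simp only [affRep, MonoidHom.coe_mk, OneHom.coe_mk, SemidirectProduct.right_inr,
    SemidirectProduct.left_inr, toAdd_one]
  rfl

theorem wval_semiGen_snd (m : ℕ) (B : FreeGroup L →* Matrix σ σ ℤ)
    (q : ℕ → (L ⊕ σ) ⊕ Unit) (w : List (ℕ × Bool)) :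
    (wval (fun j => semiGen m B (q j)) w).2 = Multiplicative.ofAdd
      ((((w.map fun p => if (q p.1).isRight then (if p.2 = true then (1 : ℤ) else -1) else 0).sum :
        ℤ)) : ZMod (m + 1)) := by
  induction w with
  | nil => simp
  | cons p w ih =>
    rw [wval_cons, Prod.snd_mul, ih, List.map_cons, List.sum_cons, Int.cast_add, ofAdd_add]
    congr 1
    rcases q p.1 with (l | s) | u <;> split <;> simp [semiGen, genY, genE, genC]

/-- The word problem is solved by evaluating two faithful matrix representations and
the exponent sum of the central generator. -/
theorem primrecPred_wval_semiGen [Finite L] [Nontrivial L] (hn : 0 < n)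
    (q : (L ⊕ σ) ⊕ Unit ≃ Fin n)
    (B : ℕ → FreeGroup L →* Matrix σ σ ℤ)
    (hB : ∀ l, PrimrecMat fun m => B m (.of l)) (hB' : ∀ l, PrimrecMat fun m => B m (.of l)⁻¹) :
    PrimrecPred fun p : ℕ × List (ℕ × Bool) =>
      wval (fun j => semiGen p.1 (B p.1) (q.symm ⟨j % n, Nat.mod_lt _ hn⟩)) p.2 = 1 := by
  obtain ⟨lab, hlab⟩ : ∃ lab : L → ℤ, Function.Injective lab := by
    obtain ⟨k, ⟨e⟩⟩ := Finite.exists_equiv_fin L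
    exact ⟨fun l => (e l : ℕ), fun a b h => e.injective (Fin.ext (Int.natCast_inj.1 h))⟩
  let ρ₁ : ∀ m, SemiGroup m (B m) →* Matrix (Fin 2) (Fin 2) ℤ := fun m =>
    ((Units.coeHom _).comp (freeRep lab)).comp
      (SemidirectProduct.rightHom.comp (MonoidHom.fst _ _))
  let ρ₂ : ∀ m, SemiGroup m (B m) →* Matrix (σ ⊕ Unit) (σ ⊕ Unit) ℤ := fun m =>
    (affRep (B m)).comp (MonoidHom.fst _ _)
  have h₁ := primrecMat_wval hn (fun m k => semiGen m (B m) (q.symm k)) ρ₁ (fun k => by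
      rcases q.symm k with (l | s) | u
      · exact PrimrecMat.const (freeRep lab (.of l)).1
      · exact PrimrecMat.const (freeRep lab 1).1
      · exact PrimrecMat.const (freeRep lab 1).1) (fun k => by
      rcases q.symm k with (l | s) | u
      · exact PrimrecMat.const (freeRep lab (.of l)⁻¹).1
      · exact PrimrecMat.const (freeRep lab 1⁻¹).1
      · exact PrimrecMat.const (freeRep lab 1⁻¹).1)
  have hblock : ∀ {M : ℕ → Matrix σ σ ℤ}, PrimrecMat M → PrimrecMat fun m =>
      Matrix.fromBlocks (M m) 0 0 (1 : Matrix Unit Unit ℤ) := by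
    intro M hM s t
    rcases s with s | s <;> rcases t with t | t
    · exact hM s t
    · exact PrimrecInt.const 0
    · exact PrimrecInt.const 0
    · exact PrimrecInt.const _
  have h₂ := primrecMat_wval hn (fun m k => semiGen m (B m) (q.symm k)) ρ₂ (fun k => by
      rcases q.symm k with (l | s) | u
      · have : ∀ m, ρ₂ m (genY m (B m) l) = Matrix.fromBlocks (B m (.of l)) 0 0 1 := fun m =>
          affRep_inr _ _
        simpa only [semiGen, Sum.elim_inl, this] using hblock (hB l)
      · have : ∀ m, ρ₂ m (genE m (B m) s) = _ := fun m => affRep_inl _ _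
        simpa only [semiGen, Sum.elim_inl, Sum.elim_inr, this] using PrimrecMat.const _
      · have : ∀ m, ρ₂ m (genC m (B m)) = 1 := fun m => map_one (affRep (B m))
        simpa only [semiGen, Sum.elim_inr, this] using PrimrecMat.const 1) (fun k => by
      rcases q.symm k with (l | s) | u
      · have : ∀ m, ρ₂ m (genY m (B m) l)⁻¹ = Matrix.fromBlocks (B m (.of l)⁻¹) 0 0 1 := by
          intro m
          rw [← affRep_inr]
          exact congrArg (affRep (B m)) (map_inv SemidirectProduct.inr _).symm
        simpa only [semiGen, Sum.elim_inl, this] using hblock (hB' l)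
      · have : ∀ m, ρ₂ m (genE m (B m) s)⁻¹ = _ := fun m => (congrArg (affRep (B m))
          (map_inv SemidirectProduct.inl _).symm).trans (affRep_inl _ _)
        simpa only [semiGen, Sum.elim_inl, Sum.elim_inr, this] using PrimrecMat.const _
      · have : ∀ m, ρ₂ m (genC m (B m))⁻¹ = 1 := fun m =>
          (congrArg (affRep (B m)) inv_one).trans (map_one (affRep (B m)))
        simpa only [semiGen, Sum.elim_inr, this] using PrimrecMat.const 1)
  have h₃ : PrimrecInt fun w : List (ℕ × Bool) => (w.map fun p =>
      if (q.symm ⟨p.1 % n, Nat.mod_lt _ hn⟩).isRight then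
        (if p.2 = true then (1 : ℤ) else -1) else 0).sum := by
    refine PrimrecInt.list_sum (PrimrecInt.ite ?_ (PrimrecInt.ite ?_ (PrimrecInt.const _)
      (PrimrecInt.const _)) (PrimrecInt.const _))
    · have : Primrec fun k : Fin n => (q.symm k).isRight := Primrec.dom_finite _
      refine Primrec.eq.comp (f := fun p : ℕ × Bool =>
        (q.symm ⟨p.1 % n, Nat.mod_lt _ hn⟩).isRight) (this.comp ?_) (Primrec.const true)
      exact Primrec.fin_val_iff.1 (Primrec.nat_mod.comp Primrec.fst (Primrec.const n))
    · exact Primrec.eq.comp Primrec.snd (Primrec.const true)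
  have hone : ∀ {κ : Type} [Fintype κ] [DecidableEq κ] (M : ℕ × List (ℕ × Bool) → Matrix κ κ ℤ),
      PrimrecMat M → PrimrecPred fun p => M p = 1 := by
    intro κ _ _ M hM
    have hall : ∀ l : List (κ × κ), PrimrecPred fun p => ∀ x ∈ l, M p x.1 x.2 =
        (1 : Matrix κ κ ℤ) x.1 x.2 := by
      intro l
      induction l with
      | nil => exact (Primrec.eq.comp (Primrec.const 0) (Primrec.const 0)).of_eq fun p => by simp
      | cons x l ih =>
        exact (((hM x.1 x.2).eq_const ((1 : Matrix κ κ ℤ) x.1 x.2)).and ih).of_eq fun p =>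
          (List.forall_mem_cons (p := fun x : κ × κ => M p x.1 x.2 = (1 : Matrix κ κ ℤ) x.1 x.2)).symm
    refine (hall Finset.univ.toList).of_eq fun p => ?_
    rw [← Matrix.ext_iff]
    simp
  refine (((hone _ h₁).and (hone _ h₂)).and ((h₃.comp Primrec.snd).dvd
    (Primrec.succ.comp Primrec.fst))).of_eq fun p => ?_
  obtain ⟨m, w⟩ := p
  dsimp only
  set g := wval (fun j => semiGen m (B m) (q.symm ⟨j % n, Nat.mod_lt _ hn⟩)) w with hg
  have hz := wval_semiGen_snd m (B m) (fun j => q.symm ⟨j % n, Nat.mod_lt _ hn⟩) w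
  rw [← hg] at hz
  have hdvd : ∀ z : ℤ, ((m.succ : ℕ) : ℤ) ∣ z ↔ Multiplicative.ofAdd (z : ZMod (m + 1)) = 1 := by
    intro z
    rw [← ZMod.intCast_zmod_eq_zero_iff_dvd]
    exact (Equiv.apply_eq_iff_eq Multiplicative.ofAdd).symm
  rw [hdvd, ← hz]
  constructor
  · rintro ⟨⟨h1, h2⟩, h3⟩
    refine Prod.ext (SemidirectProduct.ext (affRep_eq_one h2) ?_) h3
    apply freeRep_injective hlab
    apply Units.ext
    refine h1.trans ?_
    rw [Prod.fst_one, SemidirectProduct.one_right, map_one, Units.val_one]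
  · intro h
    rw [h]
    simp
end WordProblem

/-! ### The family of presentations -/

section Family

variable {α κ L σ : Type}

theorem Primrec.list_replicate' {β γ : Type} [Primcodable β] [Primcodable γ] {k : β → ℕ}
    (hk : Primrec k) (c : γ) : Primrec fun b => List.replicate (k b) c :=
  (Primrec.list_map (Primrec.list_range.comp hk) (Primrec.const c).to₂).of_eq fun b => by
    simp [List.map_const']

theorem Primrec.map_const_list {β γ δ : Type} [Primcodable β] [Primcodable γ] (l : List δ)
    {F : δ → β → γ} (hF : ∀ x, Primrec (F x)) : Primrec fun b => l.map fun x => F x b := by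
  induction l with
  | nil => exact Primrec.const []
  | cons x l ih => exact Primrec.list_cons.comp (hF x) ih

theorem primrec_semiWords [Fintype L] [Fintype σ] (q : (L ⊕ σ) ⊕ Unit → ℕ)
    {A : ℕ → L → Matrix σ σ ℤ} (hA : ∀ l, PrimrecMat fun m => A m l) :
    Primrec fun m => semiWords q m (A m) := by
  refine Primrec.list_append.comp (Primrec.list_append.comp (Primrec.list_append.comp ?_ ?_) ?_) ?_
  · exact Primrec.const _
  · refine Primrec.map_const_list _ fun p => Primrec.list_append.comp (Primrec.const _) ?_
    refine Primrec.list_flatten.comp (Primrec.map_const_list _ fun s =>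
      Primrec.list_append.comp ?_ ?_)
    · exact Primrec.list_replicate' (hA p.1 s p.2).neg.toNat _
    · exact Primrec.list_replicate' (hA p.1 s p.2).neg.neg.toNat _
  · exact Primrec.const _
  · exact Primrec.list_cons.comp (Primrec.list_replicate' Primrec.succ _) (Primrec.const [])

open scoped commutatorElement in
/-- The word `w_ν` whose triviality in the finitely presented group is undecidable. -/
def commutatorWord (k t x : FreeGroup α) (ν : ℕ) : FreeGroup α := ⁅k, x ^ ν * t * (x ^ ν)⁻¹⁆

theorem primrecMat_freeRep_pow (l : α → ℤ) (x : FreeGroup α) :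
    PrimrecMat fun ν => (freeRep l (x ^ ν)).1 := by
  have h := (PrimrecMat.const (β := Unit × Unit) (freeRep l x).1).list_prod
  have := h.comp (h := fun ν : ℕ => ((), List.replicate ν ()))
    ((Primrec.const ()).pair (Primrec.list_replicate' Primrec.id ()))
  simpa using this

theorem primrecMat_commutatorWord (l : α → ℤ) (k t x : FreeGroup α) :
    PrimrecMat (fun ν => (freeRep l (commutatorWord k t x ν)).1) ∧
      PrimrecMat (fun ν => (freeRep l (commutatorWord k t x ν)⁻¹).1) := by
  have hc : ∀ g : FreeGroup α, PrimrecMat fun _ : ℕ => (freeRep l g).1 := fun g =>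
    PrimrecMat.const _
  have hm : ∀ {f g : ℕ → FreeGroup α}, PrimrecMat (fun ν => (freeRep l (f ν)).1) →
      PrimrecMat (fun ν => (freeRep l (g ν)).1) →
      PrimrecMat fun ν => (freeRep l (f ν * g ν)).1 := by
    intro f g hf hg
    simpa using hf.mul hg
  have hx := primrecMat_freeRep_pow l x
  have hx' := primrecMat_freeRep_pow l x⁻¹
  simp only [inv_pow] at hx'
  have hy : ∀ s, PrimrecMat fun ν => (freeRep l (x ^ ν * s * (x ^ ν)⁻¹)).1 := fun s =>
    hm (hm hx (hc s)) hx'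
  constructor
  · have := hm (hm (hm (hc k) (hy t)) (hc k⁻¹)) (hy t⁻¹)
    have hw : ∀ ν, commutatorWord k t x ν =
        k * (x ^ ν * t * (x ^ ν)⁻¹) * k⁻¹ * (x ^ ν * t⁻¹ * (x ^ ν)⁻¹) := fun ν => by
      simp only [commutatorWord, commutatorElement_def]
      group
    simpa only [hw] using this
  · have := hm (hm (hm (hy t) (hc k)) (hy t⁻¹)) (hc k⁻¹)
    have hw : ∀ ν, (commutatorWord k t x ν)⁻¹ =
        (x ^ ν * t * (x ^ ν)⁻¹) * k * (x ^ ν * t⁻¹ * (x ^ ν)⁻¹) * k⁻¹ := fun ν => by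
      simp only [commutatorWord, commutatorElement_def]
      group
    simpa only [hw] using this

theorem primrecMat_diagRep {l : α → ℤ} {γ : ℕ → Fin 3 → FreeGroup α}
    (h : ∀ i, PrimrecMat fun ν => (freeRep l (γ ν i)).1) :
    PrimrecMat fun ν => diagRep l (γ ν) := by
  rintro ⟨i, a⟩ ⟨j, b⟩
  simp only [diagRep, MonoidHom.coe_mk, OneHom.coe_mk, Matrix.blockDiagonal_apply]
  by_cases hab : a = b
  · simpa [hab] using h b i j
  · simpa [hab] using PrimrecInt.const 0

theorem primrecMat_actRep (l : α → ℤ) (rel : κ → FreeGroup α) (k t x : FreeGroup α) (a₀ : α)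
    (z : ActLetter α κ) :
    PrimrecMat (fun ν => actRep l rel (commutatorWord k t x ν) a₀ (.of z)) ∧
      PrimrecMat (fun ν => actRep l rel (commutatorWord k t x ν) a₀ (.of z)⁻¹) := by
  obtain ⟨h1, h2⟩ := primrecMat_commutatorWord l k t x
  constructor
  · refine primrecMat_diagRep fun i => ?_
    rcases z with z | z
    · have : ∀ ν, actHom rel (commutatorWord k t x ν) a₀ (.of (.inl z)) =
          actHom rel 1 a₀ (.of (.inl z)) := fun ν => by simp [actHom]
      simpa only [this] using PrimrecMat.const _
    · have : ∀ ν, actHom rel (commutatorWord k t x ν) a₀ (.of (.inr z)) =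
          ![1, commutatorWord k t x ν, .of a₀] := fun ν => by simp [actHom]
      simp only [this]
      fin_cases i
      · exact PrimrecMat.const _
      · exact h1
      · exact PrimrecMat.const _
  · refine primrecMat_diagRep fun i => ?_
    simp only [map_inv, Pi.inv_apply]
    rcases z with z | z
    · have : ∀ ν, actHom rel (commutatorWord k t x ν) a₀ (.of (.inl z)) =
          actHom rel 1 a₀ (.of (.inl z)) := fun ν => by simp [actHom]
      simpa only [this] using PrimrecMat.const _
    · have : ∀ ν, actHom rel (commutatorWord k t x ν) a₀ (.of (.inr z)) =
          ![1, commutatorWord k t x ν, .of a₀] := fun ν => by simp [actHom]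
      simp only [this]
      fin_cases i
      · exact PrimrecMat.const _
      · simp only [map_inv] at h2
        exact h2
      · exact PrimrecMat.const _

end Family

/-- There is a recursively enumerable class of finite presentations of groups, with
uniformly solvable word problem, within which the isomorphism problem is solvable but
the commensurability problem is unsolvable. -/
theorem exists_class_isom_solvable_comm_unsolvable :
    ∃ P : ℕ → ℕ × List (List (ℕ × Bool)), Computable P ∧
      (∃ wp : ℕ × List (ℕ × Bool) → Bool, Computable wp ∧
        ∀ (i : ℕ) (w : List (ℕ × Bool)),
          wp (i, w) = true ↔ PresentedGroup.mk (codeRels (P i)) (wordToFree (P i).1 w) = 1) ∧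
      (∃ d : ℕ × ℕ → Bool, Computable d ∧
        ∀ i j : ℕ, d (i, j) = true ↔ Nonempty (codeGroup (P i) ≃* codeGroup (P j))) ∧
      ¬ ∃ e : ℕ × ℕ → Bool, Computable e ∧
        ∀ i j : ℕ, e (i, j) = true ↔ GroupCommensurable (codeGroup (P i)) (codeGroup (P j)) := by
  obtain ⟨α, κ, _, _, rel, k, t, x, S, hα, hS, hin, hout⟩ := exists_word_family
  -- distinct slopes for the ping-pong representation of the free group
  obtain ⟨l, hl⟩ : ∃ l : α → ℤ, Function.Injective l := by
    obtain ⟨r, ⟨e⟩⟩ := Finite.exists_equiv_fin α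
    exact ⟨fun a => (e a : ℕ), fun a b h => e.injective (Fin.ext (Int.natCast_inj.1 h))⟩
  have hnt : Nontrivial α := Finite.one_lt_card_iff_nontrivial.1 (by omega)
  obtain ⟨a₀⟩ : Nonempty α := inferInstance
  have := Fintype.ofFinite α
  have := Fintype.ofFinite κ
  have hL : Nontrivial (ActLetter α κ) := ⟨.inl (.inl a₀), .inr (), by simp⟩
  let n := Fintype.card ((ActLetter α κ ⊕ (Fin 2 × Fin 3)) ⊕ Unit)
  have hn : 0 < n := Fintype.card_pos
  let q : (ActLetter α κ ⊕ (Fin 2 × Fin 3)) ⊕ Unit ≃ Fin n := Fintype.equivFin _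
  let B : ℕ → FreeGroup (ActLetter α κ) →* Matrix (Fin 2 × Fin 3) (Fin 2 × Fin 3) ℤ := fun ν =>
    actRep l rel (commutatorWord k t x ν) a₀
  let P : ℕ → ℕ × List (List (ℕ × Bool)) := fun ν =>
    (n, semiWords (fun g => (q g : ℕ)) ν fun z => B ν (.of z))
  have hP : ∀ ν, ∃ Φ : codeGroup (P ν) ≃* SemiGroup ν (B ν),
      ∀ w, Φ (PresentedGroup.mk _ (wordToFree n w)) =
        wval (fun j => semiGen ν (B ν) (q.symm ⟨j % n, Nat.mod_lt _ hn⟩)) w := fun ν =>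
    exists_codeGroup_equiv q hn ν (B ν)
  choose Φ hΦ using hP
  have hB := fun z => primrecMat_actRep l rel k t x a₀ z
  refine ⟨P, ?_, ?_, ?_, ?_⟩
  · exact ((Primrec.const n).pair (primrec_semiWords _ fun z => (hB z).1)).to_comp
  · obtain ⟨_, hwp⟩ := primrecPred_wval_semiGen hn q B (fun z => (hB z).1) fun z => (hB z).2
    refine ⟨_, hwp.to_comp, fun i w => ?_⟩
    refine decide_eq_true_iff.trans ?_
    dsimp only
    rw [← hΦ i w]
    exact MulEquiv.map_eq_one_iff (Φ i)
  · refine ⟨fun p => decide (p.1 = p.2), Primrec.eq.decide.to_comp, fun i j => ?_⟩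
    rw [decide_eq_true_iff]
    dsimp only
    constructor
    · rintro rfl
      exact ⟨MulEquiv.refl _⟩
    · rintro ⟨f⟩
      exact SemiGroup.eq_of_equiv (((Φ i).symm.trans f).trans (Φ j))
  · rintro ⟨e, he, hcomm⟩
    -- deciding commensurability with `P ν₀`, where `ν₀ ∈ S`, would decide membership in `S`
    obtain ⟨ν₀, hν₀⟩ : S.Nonempty := by
      by_contra hne
      exact hS (ComputablePred.computable_iff.2 ⟨fun _ => false, Computable.const false,
        funext fun ν => by simpa using fun h => hne ⟨ν, h⟩⟩)
    have hiff : ∀ ν, e (ν, ν₀) = true ↔ ν ∈ S := by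
      intro ν
      rw [hcomm]
      constructor
      · intro h
        by_contra hν
        obtain ⟨Q, _, π, hrel, hcen, hord⟩ := hout ν hν
        exact actRep_not_commensurable a₀ ν ν₀ hα hl (hin ν₀ hν₀) π hrel hcen hord
          (h.congr (Φ ν) (Φ ν₀))
      · intro h
        exact (actRep_commensurable a₀ ν ν₀ (hin ν h) (hin ν₀ hν₀)).congr (Φ ν).symm (Φ ν₀).symm
    exact hS (ComputablePred.computable_iff.2 ⟨fun ν => e (ν, ν₀),
      he.comp (Computable.id.pair (Computable.const ν₀)), funext fun ν => propext (hiff ν).symm⟩)
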